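/- arXiv:1008.4349 — 2 statements merged into one kernel-verified Lean document; each statement's English description precedes it below -/
import Mathlib

section
/- Let X be a compact metric space, r : X → X a Borel measurable, onto, finite-to-one map, μ a strongly invariant Borel probability measure with respect to which r is ergodic, and m0 ∈ L∞(X) a non-singular QMF filter with |m0| not μ-a.e. equal to 1 and log|m0|² ∈ L¹(X,μ). Then the transfer operator R_{m0}, defined by (R_{m0} f)(x) = (1/#r⁻¹(x)) Σ_{r(y)=x} |m0(y)|² f(y) for f ∈ L∞(X), has a fixed point which is a bounded measurable function that is not μ-a.e. constant: there exists f ∈ L∞(X,μ), f not a.e. equal to a constant, with R_{m0} f = f μ-a.e. -/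
open MeasureTheory Filter

noncomputable section

/-- A complex-valued function is "in `L∞`" if it is measurable and (everywhere) bounded. -/
def BddMeasC {X : Type*} [MeasurableSpace X] (f : X → ℂ) : Prop :=
  Measurable f ∧ ∃ C, ∀ x, ‖f x‖ ≤ C

/-- `μ` is strongly invariant for `r`:
`∫ f dμ = ∫ (1/#r⁻¹(x)) Σ_{r(y)=x} f(y) dμ(x)` for all bounded measurable `f`. -/
def StronglyInvariant {X : Type*} [MeasurableSpace X] (r : X → X) (μ : Measure X) : Prop :=
  ∀ f : X → ℝ, Measurable f → (∃ C, ∀ x, |f x| ≤ C) →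
    ∫ x, f x ∂μ =
      ∫ x, (Nat.card (r ⁻¹' {x}) : ℝ)⁻¹ * ∑' y : (r ⁻¹' {x}), f (y : X) ∂μ

/-- `m0` is a quadrature mirror filter: `(1/#r⁻¹(x)) Σ_{r(y)=x} |m0(y)|² = 1` for μ-a.e. `x`. -/
def IsQMF {X : Type*} [MeasurableSpace X] (r : X → X) (μ : Measure X) (m0 : X → ℂ) : Prop :=
  ∀ᵐ x ∂μ, (Nat.card (r ⁻¹' {x}) : ℝ)⁻¹ * ∑' y : (r ⁻¹' {x}), ‖m0 (y : X)‖ ^ 2 = 1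

/-! Put `w = |m0|²` and `T f = R_{m0} f`. Since `∫ √w < 1`, the quantity `Z = ∑ₙ ∏_{k<n} w ∘ rᵏ` is
finite a.e.: otherwise it is infinite a.e. by ergodicity, and letting `N → ∞` in
`0 ≤ ∫ log (Z_{N+1} / (Z_N ∘ r)) ≤ 2 ∫ (√(w + (Z_N ∘ r)⁻¹) - 1)`, where `Z_N` are the partial sums,
gives `1 ≤ ∫ √w`.

For a set `A`, let `U_A` be the weighted average of the indicator of `A` along the forward orbit,
and let `V = 1 / Z` be the share of the starting point. Then `|U_A - U_A ∘ r| ≤ V` and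
`T (U_A ∘ r) = U_A`, so the increments of `Tⁿ U_A` are at most `Tⁿ⁺¹ V`, which is summable a.e.
because the functions `Tⁿ V` are nonnegative with integrals adding up to `1`. Hence `Tⁿ U_A`
converges to a fixed point `f_A` with values in `[0, 1]`.

There are `ε > 0` and a set `B` of positive measure with `f_A ≥ ε` on `A ∩ B` for every `A`. If all
the `f_A` were constant, then pairwise disjoint sets `A_1, …, A_k` meeting `B` in positive measure,
with `k > 1 / ε`, would give `1 < k ε ≤ ∑ f_{A_i} ≤ 1`. Such sets exist because `μ` has no atoms:
the mass of a point does not decrease along its orbit, so by ergodicity it would be a positive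
constant, forcing one-point fibres a.e. and `w = 1`. -/

section OrbitWeights

variable {X : Type*} {r : X → X} {w g : X → ℝ} {x : X}

/-- The multiplicative cocycle `w(x) w(r x) ⋯ w(rⁿ⁻¹ x)`. -/
def orbitWeight (r : X → X) (w : X → ℝ) (n : ℕ) (x : X) : ℝ :=
  ∏ k ∈ Finset.range n, w (r^[k] x)

/-- The sum of `g` along the forward orbit of `x`, each point carrying its `orbitWeight`, or `0`
when the series diverges. -/
def orbitSum (r : X → X) (w g : X → ℝ) (x : X) : ℝ :=
  ∑' n, orbitWeight r w n x * g (r^[n] x)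

/-- The share of the starting point in the total weight of its orbit, or `0` when that total
diverges. -/
def initialShare (r : X → X) (w : X → ℝ) (x : X) : ℝ :=
  (orbitSum r w 1 x)⁻¹

/-- The weighted average of `g` along the forward orbit of `x`. -/
def orbitAverage (r : X → X) (w g : X → ℝ) (x : X) : ℝ :=
  orbitSum r w g x * initialShare r w x

lemma orbitWeight_zero : orbitWeight r w 0 = 1 := by
  ext
  simp [orbitWeight]

lemma orbitWeight_succ (n : ℕ) : orbitWeight r w (n + 1) = w * orbitWeight r w n ∘ r := by
  ext x
  simp [orbitWeight, Finset.prod_range_succ', mul_comm]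

lemma orbitWeight_nonneg (hw : 0 ≤ w) (n : ℕ) : 0 ≤ orbitWeight r w n :=
  fun _ => Finset.prod_nonneg fun _ _ => hw _

lemma summable_orbitWeight_of_map (hs : Summable fun n => orbitWeight r w n (r x)) :
    Summable fun n => orbitWeight r w n x := by
  refine (summable_nat_add_iff 1).1 ?_
  simpa only [orbitWeight_succ, Pi.mul_apply, Function.comp_apply] using hs.mul_left (w x)

lemma summable_orbitWeight_mul (hw : 0 ≤ w) (hg : 0 ≤ g) (hg1 : g ≤ 1)
    (hs : Summable fun n => orbitWeight r w n x) :
    Summable fun n => orbitWeight r w n x * g (r^[n] x) :=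
  hs.of_nonneg_of_le (fun n => mul_nonneg (orbitWeight_nonneg hw n x) (hg _))
    fun n => mul_le_of_le_one_right (orbitWeight_nonneg hw n x) (hg1 _)

lemma orbitSum_one : orbitSum r w 1 x = ∑' n, orbitWeight r w n x := by
  simp [orbitSum]

lemma orbitSum_nonneg (hw : 0 ≤ w) (hg : 0 ≤ g) : 0 ≤ orbitSum r w g :=
  fun _ => tsum_nonneg fun n => mul_nonneg (orbitWeight_nonneg hw n _) (hg _)

lemma orbitSum_eq_add (hw : 0 ≤ w) (hg : 0 ≤ g) (hg1 : g ≤ 1)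
    (hs : Summable fun n => orbitWeight r w n (r x)) :
    orbitSum r w g x = g x + w x * orbitSum r w g (r x) := by
  rw [orbitSum, (summable_orbitWeight_mul hw hg hg1
    (summable_orbitWeight_of_map hs)).tsum_eq_zero_add, orbitSum, ← tsum_mul_left]
  simp [orbitWeight_zero, orbitWeight_succ, mul_assoc]

lemma one_le_orbitSum_one (hw : 0 ≤ w) (hs : Summable fun n => orbitWeight r w n x) :
    1 ≤ orbitSum r w 1 x := by
  rw [orbitSum_one]
  simpa [orbitWeight_zero] using hs.le_tsum 0 fun n _ => orbitWeight_nonneg hw n x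

lemma initialShare_nonneg (hw : 0 ≤ w) : 0 ≤ initialShare r w :=
  fun x => inv_nonneg.2 (orbitSum_nonneg hw zero_le_one x)

lemma initialShare_pos (hw : 0 ≤ w) (hs : Summable fun n => orbitWeight r w n x) :
    0 < initialShare r w x :=
  inv_pos.2 (one_pos.trans_le (one_le_orbitSum_one hw hs))

lemma sum_orbitAverage_le_one {ι : Type*} (s : Finset ι) {g : ι → X → ℝ} (hw : 0 ≤ w)
    (hg : ∀ i, 0 ≤ g i) (hg1 : ∑ i ∈ s, g i ≤ 1) (x : X) :
    ∑ i ∈ s, orbitAverage r w (g i) x ≤ 1 := by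
  by_cases hs : Summable fun n => orbitWeight r w n x
  · have hle (i) (hi : i ∈ s) : g i ≤ 1 :=
      (Finset.single_le_sum (fun j _ => hg j) hi).trans hg1
    have hsum : ∑ i ∈ s, orbitSum r w (g i) x ≤ orbitSum r w 1 x := by
      simp only [orbitSum]
      rw [← Summable.tsum_finsetSum fun i hi => summable_orbitWeight_mul hw (hg i) (hle i hi) hs]
      simp only [← Finset.mul_sum, ← Finset.sum_apply]
      have h0 : 0 ≤ ∑ i ∈ s, g i := Finset.sum_nonneg fun i _ => hg i
      exact (summable_orbitWeight_mul hw h0 hg1 hs).tsum_le_tsum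
        (fun n => mul_le_mul_of_nonneg_left (hg1 _) (orbitWeight_nonneg hw n x))
        (summable_orbitWeight_mul hw zero_le_one le_rfl hs)
    simp only [orbitAverage]
    rw [← Finset.sum_mul, initialShare, ← div_eq_mul_inv]
    exact div_le_one_of_le₀ hsum (orbitSum_nonneg hw zero_le_one x)
  · simp [orbitAverage, initialShare, orbitSum_one, tsum_eq_zero_of_not_summable hs]

lemma orbitAverage_nonneg (hw : 0 ≤ w) (hg : 0 ≤ g) : 0 ≤ orbitAverage r w g :=
  fun x => mul_nonneg (orbitSum_nonneg hw hg x) (initialShare_nonneg hw x)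

lemma orbitAverage_le_one (hw : 0 ≤ w) (hg : 0 ≤ g) (hg1 : g ≤ 1) : orbitAverage r w g ≤ 1 := by
  intro x
  simpa using sum_orbitAverage_le_one (r := r) {()} (g := fun _ => g) hw (fun _ => hg)
    (by simpa using hg1) x

lemma initialShare_le_one (hw : 0 ≤ w) : initialShare r w ≤ 1 := by
  intro x
  by_cases hs : Summable fun n => orbitWeight r w n x
  · exact inv_le_one_of_one_le₀ (one_le_orbitSum_one hw hs)
  · simp [initialShare, orbitSum_one, tsum_eq_zero_of_not_summable hs]

lemma orbitAverage_eq_add (hw : 0 ≤ w) (hg : 0 ≤ g) (hg1 : g ≤ 1)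
    (hs : Summable fun n => orbitWeight r w n (r x)) :
    orbitAverage r w g x = initialShare r w x * g x +
      (1 - initialShare r w x) * orbitAverage r w g (r x) := by
  have hx := one_le_orbitSum_one hw (summable_orbitWeight_of_map hs)
  have hrx := one_le_orbitSum_one hw hs
  have hrec := orbitSum_eq_add hw zero_le_one le_rfl hs
  simp only [Pi.one_apply] at hrec
  rw [orbitAverage, orbitAverage, orbitSum_eq_add hw hg hg1 hs, initialShare, initialShare]
  field_simp
  linear_combination -(orbitSum r w g (r x)) * hrec

/-- With `V` the initial share and `U` an orbit average, `U x ≥ (1 - V x) U (r x)`; iterate and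
use `∏ (1 - Vₖ) ≥ 1 - ∑ Vₖ`. -/
lemma orbitAverage_iterate_mul_le (hw : 0 ≤ w) (hg : 0 ≤ g) (hg1 : g ≤ 1) (n : ℕ)
    (hs : ∀ k, Summable fun n => orbitWeight r w n (r^[k] x)) :
    orbitAverage r w g (r^[n] x) * (1 - birkhoffSum r (initialShare r w) n x) ≤
      orbitAverage r w g x := by
  induction n generalizing x with
  | zero => simp
  | succ n ih =>
    have hrec := orbitAverage_eq_add hw hg hg1 (hs 1)
    have hstep := ih (x := r x) fun k => hs (k + 1)
    have hB : 0 ≤ birkhoffSum r (initialShare r w) n (r x) :=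
      Finset.sum_nonneg fun k _ => initialShare_nonneg hw _
    have hu : 0 ≤ orbitAverage r w g (r^[n] (r x)) := orbitAverage_nonneg hw hg _
    have hV : 0 ≤ initialShare r w x := initialShare_nonneg hw x
    have hV1 : initialShare r w x ≤ 1 := initialShare_le_one hw x
    have hgx : 0 ≤ g x := hg x
    rw [birkhoffSum_succ', Function.iterate_succ_apply, hrec]
    nlinarith [mul_le_mul_of_nonneg_left hstep (sub_nonneg.2 hV1), mul_nonneg hV hgx,
      mul_nonneg (mul_nonneg hu hV) hB]

lemma abs_orbitAverage_sub_le (hw : 0 ≤ w) (hg : 0 ≤ g) (hg1 : g ≤ 1)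
    (hs : Summable fun n => orbitWeight r w n (r x)) :
    |orbitAverage r w g x - orbitAverage r w g (r x)| ≤ initialShare r w x := by
  have hsub : orbitAverage r w g x - orbitAverage r w g (r x) =
      initialShare r w x * (g x - orbitAverage r w g (r x)) := by
    rw [orbitAverage_eq_add hw hg hg1 hs]
    ring
  rw [hsub, abs_mul, abs_of_nonneg (initialShare_nonneg hw x)]
  refine mul_le_of_le_one_right (initialShare_nonneg hw x) (abs_sub_le_iff.2 ⟨?_, ?_⟩)
  · have hU : 0 ≤ orbitAverage r w g (r x) := orbitAverage_nonneg hw hg (r x)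
    have hgx : g x ≤ 1 := hg1 x
    linarith
  · have hU : orbitAverage r w g (r x) ≤ 1 := orbitAverage_le_one hw hg hg1 (r x)
    have hgx : 0 ≤ g x := hg x
    linarith

variable [MeasurableSpace X]

lemma measurable_orbitWeight (hr : Measurable r) (hw : Measurable w) (n : ℕ) :
    Measurable (orbitWeight r w n) :=
  Finset.measurable_fun_prod _ fun k _ => hw.comp (hr.iterate k)

lemma measurable_orbitSum (hr : Measurable r) (hw : Measurable w) (hg : Measurable g) :
    Measurable (orbitSum r w g) :=
  Measurable.tsum fun n => (measurable_orbitWeight hr hw n).mul (hg.comp (hr.iterate n))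

lemma measurable_initialShare (hr : Measurable r) (hw : Measurable w) :
    Measurable (initialShare r w) :=
  (measurable_orbitSum hr hw measurable_one).inv

lemma measurable_orbitAverage (hr : Measurable r) (hw : Measurable w) (hg : Measurable g) :
    Measurable (orbitAverage r w g) :=
  (measurable_orbitSum hr hw hg).mul (measurable_initialShare hr hw)

end OrbitWeights

section Transience

variable {X : Type*} {r : X → X} {w : X → ℝ}

/-- The total weight of the first `N + 1` points of the orbit of `x`. -/
def partialWeight (r : X → X) (w : X → ℝ) (N : ℕ) (x : X) : ℝ :=
  ∑ n ∈ Finset.range (N + 1), orbitWeight r w n x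

lemma partialWeight_succ (N : ℕ) (x : X) :
    partialWeight r w (N + 1) x = 1 + w x * partialWeight r w N (r x) := by
  simp only [partialWeight]
  rw [Finset.sum_range_succ', add_comm, Finset.mul_sum]
  simp [orbitWeight_zero, orbitWeight_succ]

lemma one_le_partialWeight (hw : 0 ≤ w) (N : ℕ) (x : X) : 1 ≤ partialWeight r w N x := by
  have h := Finset.single_le_sum (fun n _ => orbitWeight_nonneg (r := r) hw n x)
    (Finset.mem_range.2 N.succ_pos)
  simpa only [orbitWeight_zero, Pi.one_apply] using! h

lemma partialWeight_le_succ (hw : 0 ≤ w) (N : ℕ) (x : X) :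
    partialWeight r w N x ≤ partialWeight r w (N + 1) x :=
  Finset.sum_le_sum_of_subset_of_nonneg (Finset.range_mono (Nat.le_succ _))
    fun n _ _ => orbitWeight_nonneg hw n x

lemma sqrt_weight_add_inv_le (hw : 0 ≤ w) (N : ℕ) (x : X) :
    √(w x + (partialWeight r w N (r x))⁻¹) ≤ w x + 1 := by
  have hwx : 0 ≤ w x := hw x
  have hinv := inv_le_one_of_one_le₀ (one_le_partialWeight (r := r) hw N (r x))
  exact Real.sqrt_le_iff.2 ⟨by positivity, by nlinarith⟩

lemma tendsto_sqrt_weight_add_inv {x : X} (hw : 0 ≤ w)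
    (hdiv : ¬ Summable fun n => orbitWeight r w n (r x)) :
    Tendsto (fun N => √(w x + (partialWeight r w N (r x))⁻¹)) atTop (nhds √(w x)) := by
  have hZ : Tendsto (fun N => partialWeight r w N (r x)) atTop atTop :=
    (tendsto_add_atTop_iff_nat 1).2 ((not_summable_iff_tendsto_nat_atTop_of_nonneg
      fun n => orbitWeight_nonneg hw n (r x)).1 hdiv)
  simpa only [add_zero, Pi.inv_apply] using (hZ.inv_tendsto_atTop.const_add (w x)).sqrt

variable [MeasurableSpace X] {μ : Measure X}

lemma measurable_partialWeight (hr : Measurable r) (hw : Measurable w) (N : ℕ) :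
    Measurable (partialWeight r w N) :=
  Finset.measurable_fun_sum _ fun n _ => measurable_orbitWeight hr hw n

lemma integrable_log_partialWeight (hr : MeasurePreserving r μ μ) (hw : 0 ≤ w)
    (hwm : Measurable w) (hwi : Integrable w μ) (N : ℕ) :
    Integrable (fun x => Real.log (partialWeight r w N x)) μ := by
  induction N with
  | zero => simp [partialWeight, orbitWeight_zero]
  | succ N ih =>
    refine ((hr.integrable_comp_of_integrable ih).add hwi).mono'
      (measurable_partialWeight hr.measurable hwm _).log.aestronglyMeasurable
      (ae_of_all _ fun x => ?_)
    have hx := one_le_partialWeight (r := r) hw (N + 1) x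
    have hrx := one_le_partialWeight (r := r) hw N (r x)
    have hwx : 0 ≤ w x := hw x
    rw [Real.norm_of_nonneg (Real.log_nonneg hx)]
    calc Real.log (partialWeight r w (N + 1) x)
        ≤ Real.log (partialWeight r w N (r x) * (1 + w x)) := by
          refine Real.log_le_log (one_pos.trans_le hx) ?_
          rw [partialWeight_succ]
          linarith
      _ = Real.log (partialWeight r w N (r x)) + Real.log (1 + w x) :=
          Real.log_mul (one_pos.trans_le hrx).ne' (by positivity)
      _ ≤ Real.log (partialWeight r w N (r x)) + w x := by
          linarith [Real.log_le_sub_one_of_pos (show 0 < 1 + w x by positivity)]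

lemma log_le_two_mul_sqrt_sub_one {t : ℝ} (ht : 0 < t) : Real.log t ≤ 2 * (√t - 1) := by
  have h := Real.log_le_sub_one_of_pos (Real.sqrt_pos.2 ht)
  rw [Real.log_sqrt ht.le] at h
  linarith

lemma integrable_sqrt_weight_add_inv [IsFiniteMeasure μ] (hr : Measurable r) (hw : 0 ≤ w)
    (hwm : Measurable w) (hwi : Integrable w μ) (N : ℕ) :
    Integrable (fun x => √(w x + (partialWeight r w N (r x))⁻¹)) μ := by
  refine (hwi.add (integrable_const 1)).mono' (hwm.add
    ((measurable_partialWeight hr hwm N).comp hr).inv).sqrt.aestronglyMeasurable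
    (ae_of_all _ fun x => ?_)
  rw [Real.norm_of_nonneg (Real.sqrt_nonneg _)]
  exact sqrt_weight_add_inv_le hw N x

/-- With `Z N` the partial weight, `w + (Z N ∘ r)⁻¹` is the ratio `Z (N + 1) / (Z N ∘ r)`, and
`∫ log (Z N)` is nondecreasing in `N`. -/
lemma one_le_integral_sqrt_weight_add_inv [IsProbabilityMeasure μ] (hr : MeasurePreserving r μ μ)
    (hw : 0 ≤ w) (hwm : Measurable w) (hwi : Integrable w μ) (N : ℕ) :
    1 ≤ ∫ x, √(w x + (partialWeight r w N (r x))⁻¹) ∂μ := by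
  have hlog := integrable_log_partialWeight hr hw hwm hwi
  have hlogr : Integrable (fun x => Real.log (partialWeight r w N (r x))) μ :=
    hr.integrable_comp_of_integrable (hlog N)
  have hsqrt := integrable_sqrt_weight_add_inv hr.measurable hw hwm hwi N
  have hinc : 0 ≤ ∫ x, (Real.log (partialWeight r w (N + 1) x) -
      Real.log (partialWeight r w N (r x))) ∂μ := by
    have hcomp := integral_map hr.aemeasurable
      (hr.map_eq.symm ▸ (hlog N).aestronglyMeasurable)
    rw [integral_sub (hlog _) hlogr, ← hcomp, hr.map_eq, sub_nonneg]
    refine integral_mono (hlog N) (hlog (N + 1)) fun x => Real.log_le_log ?_ ?_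
    · exact one_pos.trans_le (one_le_partialWeight hw N x)
    · exact partialWeight_le_succ hw N x
  have hle : ∫ x, (Real.log (partialWeight r w (N + 1) x) -
      Real.log (partialWeight r w N (r x))) ∂μ ≤
      ∫ x, 2 * (√(w x + (partialWeight r w N (r x))⁻¹) - 1) ∂μ := by
    refine integral_mono ((hlog _).sub hlogr) ((hsqrt.sub (integrable_const 1)).const_mul 2)
      fun x => ?_
    have hx := one_pos.trans_le (one_le_partialWeight (r := r) hw (N + 1) x)
    have hrx := one_pos.trans_le (one_le_partialWeight (r := r) hw N (r x))
    have hratio : w x + (partialWeight r w N (r x))⁻¹ =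
        partialWeight r w (N + 1) x / partialWeight r w N (r x) := by
      rw [partialWeight_succ]
      field_simp
      ring
    beta_reduce
    rw [← Real.log_div hx.ne' hrx.ne', hratio]
    exact log_le_two_mul_sqrt_sub_one (div_pos hx hrx)
  rw [integral_const_mul, integral_sub hsqrt (integrable_const 1)] at hle
  simp only [integral_const, probReal_univ, one_smul] at hle
  linarith

lemma measurableSet_summable_orbitWeight (hr : Measurable r) (hw : 0 ≤ w) (hwm : Measurable w) :
    MeasurableSet {x | Summable fun n => orbitWeight r w n x} := by
  have h := measurableSet_bddAbove_range fun n =>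
    Finset.measurable_fun_sum (Finset.range n) fun k _ => measurable_orbitWeight hr hwm k
  convert h using 3 with x
  refine ⟨fun hs => ⟨∑' n, orbitWeight r w n x, ?_⟩, fun ⟨C, hC⟩ => ?_⟩
  · rintro _ ⟨n, rfl⟩
    exact hs.sum_le_tsum _ fun k _ => orbitWeight_nonneg hw k x
  · exact summable_of_sum_range_le (fun k => orbitWeight_nonneg hw k x) fun n => hC ⟨n, rfl⟩

lemma ae_summable_orbitWeight [IsProbabilityMeasure μ] (hr : Ergodic r μ) (hw : 0 ≤ w)
    (hwm : Measurable w) (hwi : Integrable w μ) (hlt : ∫ x, √(w x) ∂μ < 1) :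
    ∀ᵐ x ∂μ, Summable fun n => orbitWeight r w n x := by
  set D := {x | Summable fun n => orbitWeight r w n x}
  have hD : MeasurableSet D := measurableSet_summable_orbitWeight hr.measurable hw hwm
  have hpre : r ⁻¹' D ⊆ D := fun x hx => summable_orbitWeight_of_map hx
  rcases hr.ae_empty_or_univ_of_preimage_ae_le hD.nullMeasurableSet
    (LE.le.eventuallyLE hpre) with hnull | hfull
  · have hdiv : ∀ᵐ x ∂μ, ¬ Summable fun n => orbitWeight r w n (r x) :=
      hr.quasiMeasurePreserving.ae (eventuallyEq_empty.1 hnull)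
    have hlim : Tendsto (fun N => ∫ x, √(w x + (partialWeight r w N (r x))⁻¹) ∂μ) atTop
        (nhds (∫ x, √(w x) ∂μ)) := by
      refine tendsto_integral_of_dominated_convergence (fun x => w x + 1)
        (fun N => (integrable_sqrt_weight_add_inv hr.measurable hw hwm hwi N).aestronglyMeasurable)
        (hwi.add (integrable_const 1)) (fun N => ae_of_all _ fun x => ?_)
        (hdiv.mono fun x => tendsto_sqrt_weight_add_inv hw)
      rw [Real.norm_of_nonneg (Real.sqrt_nonneg _)]
      exact sqrt_weight_add_inv_le hw N x
    have hge := ge_of_tendsto' hlim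
      (one_le_integral_sqrt_weight_add_inv hr.toMeasurePreserving hw hwm hwi)
    exact absurd hlt hge.not_gt
  · exact eventuallyEq_univ.1 hfull

lemma integral_sqrt_lt_one [IsProbabilityMeasure μ] (hw : 0 ≤ w) (hwi : Integrable w μ)
    (hint : ∫ x, w x ∂μ = 1) (hne : ¬ w =ᵐ[μ] 1) : ∫ x, √(w x) ∂μ < 1 := by
  have hone_add : Integrable (fun x => 1 + w x) μ := (integrable_const 1).add hwi
  have hsqrt : Integrable (fun x => √(w x)) μ := by
    refine hone_add.mono' (Real.continuous_sqrt.comp_aestronglyMeasurable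
      hwi.aestronglyMeasurable) (ae_of_all _ fun x => ?_)
    have hwx : 0 ≤ w x := hw x
    rw [Real.norm_of_nonneg (Real.sqrt_nonneg _)]
    exact Real.sqrt_le_iff.2 ⟨by positivity, by nlinarith⟩
  have hsq (x : X) : (1 - √(w x)) ^ 2 = 1 + w x - 2 * √(w x) := by
    rw [sub_sq, Real.sq_sqrt (hw x)]
    ring
  have hsqi : Integrable (fun x => (1 - √(w x)) ^ 2) μ := by
    simp only [hsq]
    exact hone_add.sub (hsqrt.const_mul 2)
  have hpos : 0 < ∫ x, (1 - √(w x)) ^ 2 ∂μ := by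
    refine (integral_nonneg fun x => sq_nonneg _).lt_of_ne' fun h0 => hne ?_
    filter_upwards [(integral_eq_zero_iff_of_nonneg (fun x => sq_nonneg _) hsqi).1 h0] with x hx
    have hx1 : √(w x) = 1 := by linarith [(pow_eq_zero_iff two_ne_zero).1 hx]
    exact Real.sqrt_eq_one.1 hx1
  have hval : ∫ x, (1 - √(w x)) ^ 2 ∂μ = 2 * (1 - ∫ x, √(w x) ∂μ) := by
    simp only [hsq]
    rw [integral_sub hone_add (hsqrt.const_mul 2),
      integral_add (integrable_const 1) hwi, integral_const_mul, hint]
    simp only [integral_const, probReal_univ, one_smul]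
    ring
  linarith

end Transience

section TransferOperators

variable {X : Type*} [MeasurableSpace X] {μ : Measure X} {r s : X → X} {u v w : X → ℝ}
  {S T : Module.End ℝ (X → ℝ)}

/-- `T` is a transfer operator of the measure-preserving map `r` with bounded weight `w`: a
positive, unital, sequentially continuous operator which is adjoint to `h ↦ w * (h ∘ r)`. It acts
on all functions, so that its laws hold almost everywhere, and boundedness is membership in `L∞`. -/
structure IsTransferOperator (r : X → X) (μ : Measure X) (w : X → ℝ)
    (T : Module.End ℝ (X → ℝ)) : Prop where
  measurePreserving : MeasurePreserving r μ μ
  weight_nonneg : 0 ≤ w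
  measurable_weight : Measurable w
  memLp_weight : MemLp w ⊤ μ
  map_mono {f g : X → ℝ} : f ≤ᵐ[μ] g → T f ≤ᵐ[μ] T g
  map_one : T 1 =ᵐ[μ] 1
  map_comp_mul (h f : X → ℝ) : T (h ∘ r * f) =ᵐ[μ] h * T f
  memLp_map {f : X → ℝ} : MemLp f ⊤ μ → MemLp (T f) ⊤ μ
  integral_map {f : X → ℝ} : MemLp f ⊤ μ → ∫ x, T f x ∂μ = ∫ x, w x * f x ∂μ
  map_tendsto {F : ℕ → X → ℝ} {f : X → ℝ} :
    (∀ᵐ x ∂μ, Tendsto (fun n => F n x) atTop (nhds (f x))) →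
      ∀ᵐ x ∂μ, Tendsto (fun n => T (F n) x) atTop (nhds (T f x))

namespace IsTransferOperator

lemma map_congr (hT : IsTransferOperator r μ w T) {f g : X → ℝ} (h : f =ᵐ[μ] g) :
    T f =ᵐ[μ] T g :=
  (hT.map_mono h.le).antisymm (hT.map_mono h.symm.le)

lemma map_nonneg (hT : IsTransferOperator r μ w T) {f : X → ℝ} (h : 0 ≤ᵐ[μ] f) :
    0 ≤ᵐ[μ] T f := by
  simpa only [map_zero] using hT.map_mono h

lemma abs_map_le (hT : IsTransferOperator r μ w T) {f g : X → ℝ} (h : |f| ≤ᵐ[μ] g) :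
    |T f| ≤ᵐ[μ] T g := by
  have hle : f ≤ᵐ[μ] g := h.mono fun x hx => (le_abs_self _).trans hx
  have hneg : -f ≤ᵐ[μ] g := h.mono fun x hx => (neg_le_abs _).trans hx
  filter_upwards [hT.map_mono hle, hT.map_mono hneg] with x hx hx'
  rw [map_neg] at hx'
  exact abs_le'.2 ⟨hx, hx'⟩

lemma map_comp (hT : IsTransferOperator r μ w T) (h : X → ℝ) : T (h ∘ r) =ᵐ[μ] h := by
  filter_upwards [hT.map_comp_mul h 1, hT.map_one] with x hx h1
  rw [mul_one] at hx
  rw [hx, Pi.mul_apply, h1, Pi.one_apply, mul_one]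

lemma one : IsTransferOperator id μ 1 (1 : Module.End ℝ (X → ℝ)) where
  measurePreserving := .id μ
  weight_nonneg := zero_le_one
  measurable_weight := measurable_one
  memLp_weight := memLp_top_const 1
  map_mono h := h
  map_one := .rfl
  map_comp_mul _ _ := .rfl
  memLp_map h := h
  integral_map _ := by simp
  map_tendsto h := h

lemma mul (hT : IsTransferOperator r μ v T) (hS : IsTransferOperator s μ u S) :
    IsTransferOperator (r ∘ s) μ (u * v ∘ s) (T * S) where
  measurePreserving := hT.measurePreserving.comp hS.measurePreserving
  weight_nonneg := mul_nonneg hS.weight_nonneg fun x => hT.weight_nonneg (s x)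
  measurable_weight := hS.measurable_weight.mul
    (hT.measurable_weight.comp hS.measurePreserving.measurable)
  memLp_weight := (hT.memLp_weight.comp_measurePreserving hS.measurePreserving).mul hS.memLp_weight
  map_mono h := hT.map_mono (hS.map_mono h)
  map_one := (hT.map_congr hS.map_one).trans hT.map_one
  map_comp_mul h f := (hT.map_congr (hS.map_comp_mul (h ∘ r) f)).trans (hT.map_comp_mul h (S f))
  memLp_map h := hT.memLp_map (hS.memLp_map h)
  integral_map {f} hf := by
    have hvs := hT.memLp_weight.comp_measurePreserving hS.measurePreserving
    calc ∫ x, T (S f) x ∂μ = ∫ x, v x * S f x ∂μ := hT.integral_map (hS.memLp_map hf)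
      _ = ∫ x, S (v ∘ s * f) x ∂μ := integral_congr_ae (hS.map_comp_mul v f).symm
      _ = ∫ x, u x * (v ∘ s * f) x ∂μ := hS.integral_map (hf.mul hvs)
      _ = ∫ x, (u * v ∘ s) x * f x ∂μ := by simp only [Pi.mul_apply, mul_assoc]
  map_tendsto h := hT.map_tendsto (hS.map_tendsto h)

lemma pow (hT : IsTransferOperator r μ w T) (n : ℕ) :
    IsTransferOperator r^[n] μ (orbitWeight r w n) (T ^ n) := by
  induction n with
  | zero => simpa only [orbitWeight_zero, pow_zero, Function.iterate_zero] using one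
  | succ n ih => simpa only [orbitWeight_succ, pow_succ, Function.iterate_succ] using ih.mul hT

lemma mul_mulLeft (hT : IsTransferOperator r μ u T) (hw : 0 ≤ w) (hwm : Measurable w)
    (hwb : MemLp w ⊤ μ) (h1 : T w =ᵐ[μ] 1) :
    IsTransferOperator r μ (u * w) (T * LinearMap.mulLeft ℝ w) where
  measurePreserving := hT.measurePreserving
  weight_nonneg := mul_nonneg hT.weight_nonneg hw
  measurable_weight := hT.measurable_weight.mul hwm
  memLp_weight := hwb.mul hT.memLp_weight
  map_mono {f g} h := hT.map_mono (h.mono fun x hx => mul_le_mul_of_nonneg_left hx (hw x))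
  map_one := by simpa using h1
  map_comp_mul h f := by simpa [mul_left_comm] using hT.map_comp_mul h (w * f)
  memLp_map hf := hT.memLp_map (hf.mul hwb)
  integral_map {f} hf := by simpa [mul_assoc] using hT.integral_map (hf.mul hwb)
  map_tendsto h := hT.map_tendsto (h.mono fun x hx => hx.const_mul (w x))

lemma integral_weight [IsProbabilityMeasure μ] (hT : IsTransferOperator r μ w T) :
    ∫ x, w x ∂μ = 1 := by
  have h := hT.integral_map (f := 1) (memLp_top_const 1)
  rw [integral_congr_ae hT.map_one] at h
  simpa using h.symm

end IsTransferOperator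

end TransferOperators

section HarmonicLimits

variable {X : Type*} [MeasurableSpace X] {μ : Measure X} {r : X → X} {w g : X → ℝ}
  {T : Module.End ℝ (X → ℝ)}

lemma lintegral_tsum_ofReal_ne_top {F : ℕ → X → ℝ} (hF : ∀ n, Integrable (F n) μ)
    (h0 : ∀ n, 0 ≤ᵐ[μ] F n) (hs : Summable fun n => ∫ x, F n x ∂μ) :
    ∫⁻ x, ∑' n, ENNReal.ofReal (F n x) ∂μ ≠ ⊤ := by
  rw [lintegral_tsum fun n => (hF n).aemeasurable.ennreal_ofReal]
  simp only [← ofReal_integral_eq_lintegral_ofReal (hF _) (h0 _)]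
  exact hs.tsum_ofReal_ne_top

lemma ae_summable_of_summable_integral {F : ℕ → X → ℝ} (hF : ∀ n, Integrable (F n) μ)
    (h0 : ∀ n, 0 ≤ᵐ[μ] F n) (hs : Summable fun n => ∫ x, F n x ∂μ) :
    ∀ᵐ x ∂μ, Summable fun n => F n x := by
  have hm : AEMeasurable (fun x => ∑' n, ENNReal.ofReal (F n x)) μ :=
    AEMeasurable.tsum fun n => (hF n).aemeasurable.ennreal_ofReal
  filter_upwards [ae_lt_top' hm (lintegral_tsum_ofReal_ne_top hF h0 hs), ae_all_iff.2 h0]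
    with x hx hx0
  exact (ENNReal.summable_toReal hx.ne).congr fun n => ENNReal.toReal_ofReal (hx0 n)

lemma integrable_tsum_of_summable_integral {F : ℕ → X → ℝ} (hF : ∀ n, Integrable (F n) μ)
    (h0 : ∀ n, 0 ≤ᵐ[μ] F n) (hs : Summable fun n => ∫ x, F n x ∂μ) :
    Integrable (fun x => ∑' n, F n x) μ := by
  have hm : AEMeasurable (fun x => ∑' n, ENNReal.ofReal (F n x)) μ :=
    AEMeasurable.tsum fun n => (hF n).aemeasurable.ennreal_ofReal
  refine (integrable_toReal_of_lintegral_ne_top hm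
    (lintegral_tsum_ofReal_ne_top hF h0 hs)).congr ?_
  filter_upwards [ae_all_iff.2 h0] with x hx0
  rw [ENNReal.tsum_toReal_eq fun n => ENNReal.ofReal_ne_top]
  exact tsum_congr fun n => ENNReal.toReal_ofReal (hx0 n)

namespace IsTransferOperator

lemma memLp_initialShare (hT : IsTransferOperator r μ w T) : MemLp (initialShare r w) ⊤ μ := by
  refine memLp_top_of_bound (measurable_initialShare hT.measurePreserving.measurable
    hT.measurable_weight).aestronglyMeasurable 1 (ae_of_all _ fun x => ?_)
  rw [Real.norm_of_nonneg (initialShare_nonneg hT.weight_nonneg x)]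
  exact initialShare_le_one hT.weight_nonneg x

lemma memLp_orbitAverage (hT : IsTransferOperator r μ w T) (hgm : Measurable g) (hg : 0 ≤ g)
    (hg1 : g ≤ 1) : MemLp (orbitAverage r w g) ⊤ μ := by
  refine memLp_top_of_bound (measurable_orbitAverage hT.measurePreserving.measurable
    hT.measurable_weight hgm).aestronglyMeasurable 1 (ae_of_all _ fun x => ?_)
  rw [Real.norm_of_nonneg (orbitAverage_nonneg hT.weight_nonneg hg x)]
  exact orbitAverage_le_one hT.weight_nonneg hg hg1 x

lemma hasSum_integral_pow_initialShare [IsProbabilityMeasure μ] (hT : IsTransferOperator r μ w T)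
    (hs : ∀ᵐ x ∂μ, Summable fun n => orbitWeight r w n x) :
    HasSum (fun n => ∫ x, (T ^ n) (initialShare r w) x ∂μ) 1 := by
  have hadjoint (n : ℕ) := (hT.pow n).integral_map hT.memLp_initialShare
  have hshare : ∀ᵐ x ∂μ, HasSum (fun n => orbitWeight r w n x * initialShare r w x) 1 := by
    filter_upwards [hs] with x hx
    have hne := (initialShare_pos hT.weight_nonneg hx).ne'
    have h := hx.hasSum.mul_right (initialShare r w x)
    rwa [← orbitSum_one, initialShare, mul_inv_cancel₀ (mt inv_eq_zero.2 hne)] at h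
  have h := hasSum_integral_of_dominated_convergence (μ := μ) (f := fun _ => (1 : ℝ))
    (fun n x => orbitWeight r w n x * initialShare r w x)
    (fun n => ((hT.pow n).measurable_weight.mul (measurable_initialShare
      hT.measurePreserving.measurable hT.measurable_weight)).aestronglyMeasurable)
    (fun n => ae_of_all _ fun x => (Real.norm_of_nonneg (mul_nonneg
      ((hT.pow n).weight_nonneg x) (initialShare_nonneg hT.weight_nonneg x))).le)
    (hshare.mono fun x hx => hx.summable)
    ((integrable_const 1).congr (hshare.mono fun x hx => hx.tsum_eq.symm)) hshare
  simpa only [hadjoint, Pi.mul_apply, integral_const, probReal_univ, one_smul] using h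

lemma integrable_pow_initialShare [IsFiniteMeasure μ] (hT : IsTransferOperator r μ w T)
    (n : ℕ) : Integrable ((T ^ n) (initialShare r w)) μ :=
  ((hT.pow n).memLp_map hT.memLp_initialShare).integrable le_top

lemma pow_initialShare_nonneg (hT : IsTransferOperator r μ w T) (n : ℕ) :
    0 ≤ᵐ[μ] (T ^ n) (initialShare r w) :=
  (hT.pow n).map_nonneg (ae_of_all _ (initialShare_nonneg hT.weight_nonneg))

lemma ae_summable_pow_initialShare [IsProbabilityMeasure μ] (hT : IsTransferOperator r μ w T)
    (hs : ∀ᵐ x ∂μ, Summable fun n => orbitWeight r w n x) :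
    ∀ᵐ x ∂μ, Summable fun n => (T ^ n) (initialShare r w) x :=
  ae_summable_of_summable_integral hT.integrable_pow_initialShare hT.pow_initialShare_nonneg
    (hT.hasSum_integral_pow_initialShare hs).summable

lemma not_one_le_tsum_pow_succ_initialShare [IsProbabilityMeasure μ]
    (hT : IsTransferOperator r μ w T) (hs : ∀ᵐ x ∂μ, Summable fun n => orbitWeight r w n x) :
    ¬ ∀ᵐ x ∂μ, 1 ≤ ∑' n, (T ^ (n + 1)) (initialShare r w) x := by
  intro hle
  have hsum := hT.hasSum_integral_pow_initialShare hs
  have hnorm (n : ℕ) : ∫ x, ‖(T ^ n) (initialShare r w) x‖ ∂μ =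
      ∫ x, (T ^ n) (initialShare r w) x ∂μ :=
    integral_congr_ae ((hT.pow_initialShare_nonneg n).mono fun x hx => Real.norm_of_nonneg hx)
  have htotal : ∫ x, ∑' n, (T ^ n) (initialShare r w) x ∂μ = 1 := by
    rw [← integral_tsum_of_summable_integral_norm hT.integrable_pow_initialShare
      (by simpa only [hnorm] using hsum.summable), hsum.tsum_eq]
  have hV := hT.memLp_initialShare.integrable (μ := μ) le_top
  have hVle : ∫ x, (1 + initialShare r w x) ∂μ ≤
      ∫ x, ∑' n, (T ^ n) (initialShare r w) x ∂μ := by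
    refine integral_mono_ae ((integrable_const 1).add hV)
      (integrable_tsum_of_summable_integral hT.integrable_pow_initialShare
        hT.pow_initialShare_nonneg hsum.summable) ?_
    filter_upwards [hle, hT.ae_summable_pow_initialShare hs] with x hx hsx
    rw [hsx.tsum_eq_zero_add, pow_zero, Module.End.one_apply]
    linarith
  have hVpos : 0 < ∫ x, initialShare r w x ∂μ := by
    refine (integral_nonneg (initialShare_nonneg hT.weight_nonneg)).lt_of_ne' fun h0 => ?_
    have hV0 := (integral_eq_zero_iff_of_nonneg (initialShare_nonneg hT.weight_nonneg) hV).1 h0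
    obtain ⟨x, hx, hsx⟩ := (hV0.and hs).exists
    exact (initialShare_pos hT.weight_nonneg hsx).ne' hx
  rw [htotal, integral_add (integrable_const 1) hV] at hVle
  simp only [integral_const, probReal_univ, one_smul] at hVle
  linarith

lemma abs_pow_succ_orbitAverage_sub_le (hT : IsTransferOperator r μ w T)
    (hs : ∀ᵐ x ∂μ, Summable fun n => orbitWeight r w n x) (hg : 0 ≤ g) (hg1 : g ≤ 1) (n : ℕ) :
    |(T ^ (n + 1)) (orbitAverage r w g) - (T ^ n) (orbitAverage r w g)| ≤ᵐ[μ]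
      (T ^ (n + 1)) (initialShare r w) := by
  have hstep : |orbitAverage r w g - orbitAverage r w g ∘ r| ≤ᵐ[μ] initialShare r w := by
    filter_upwards [hT.measurePreserving.quasiMeasurePreserving.ae hs] with x hx
    exact abs_orbitAverage_sub_le hT.weight_nonneg hg hg1 hx
  have hmap := (hT.pow (n + 1)).abs_map_le hstep
  filter_upwards [hmap, (hT.pow n).map_congr (hT.map_comp (orbitAverage r w g))] with x hx hx'
  rwa [map_sub, Pi.abs_apply, Pi.sub_apply, pow_succ T n, Module.End.mul_apply,
    Module.End.mul_apply, hx', ← Module.End.mul_apply, ← pow_succ] at hx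

lemma exists_ae_tendsto_pow_orbitAverage [IsProbabilityMeasure μ]
    (hT : IsTransferOperator r μ w T) (hs : ∀ᵐ x ∂μ, Summable fun n => orbitWeight r w n x)
    (hgm : Measurable g) (hg : 0 ≤ g) (hg1 : g ≤ 1) :
    ∃ f : X → ℝ, Measurable f ∧ (∀ x, f x ∈ Set.Icc 0 1) ∧ T f =ᵐ[μ] f ∧
      ∀ᵐ x ∂μ, Tendsto (fun n => (T ^ n) (orbitAverage r w g) x) atTop (nhds (f x)) := by
  have hcauchy : ∀ᵐ x ∂μ, ∃ l,
      Tendsto (fun n => (T ^ n) (orbitAverage r w g) x) atTop (nhds l) := by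
    filter_upwards [hT.ae_summable_pow_initialShare hs,
      ae_all_iff.2 (hT.abs_pow_succ_orbitAverage_sub_le hs hg hg1)] with x hsum hstep
    refine cauchySeq_tendsto_of_complete (cauchySeq_of_dist_le_of_summable _ (fun n => ?_)
      ((summable_nat_add_iff 1).2 hsum))
    rw [dist_comm]
    exact hstep n
  have hbounds : ∀ᵐ x ∂μ, ∀ n, (T ^ n) (orbitAverage r w g) x ∈ Set.Icc 0 1 := by
    refine ae_all_iff.2 fun n => ?_
    filter_upwards [(hT.pow n).map_nonneg (ae_of_all _ (orbitAverage_nonneg hT.weight_nonneg hg)),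
      (hT.pow n).map_mono (ae_of_all _ (orbitAverage_le_one hT.weight_nonneg hg hg1)),
      (hT.pow n).map_one] with x h0 h1 hone
    exact ⟨h0, h1.trans_eq hone⟩
  obtain ⟨f', hf', hlim'⟩ := measurable_limit_of_tendsto_metrizable_ae
    (fun n => ((hT.pow n).memLp_map (hT.memLp_orbitAverage hgm hg hg1)).1.aemeasurable) hcauchy
  obtain ⟨f, hf, hfIcc, hff'⟩ := hf'.aemeasurable.exists_ae_eq_range_subset
    (t := Set.Icc (0 : ℝ) 1) (by
      filter_upwards [hlim', hbounds] with x hx hxn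
      exact isClosed_Icc.mem_of_tendsto hx (Eventually.of_forall hxn)) ⟨0, by simp⟩
  have hlim : ∀ᵐ x ∂μ, Tendsto (fun n => (T ^ n) (orbitAverage r w g) x) atTop (nhds (f x)) := by
    filter_upwards [hlim', hff'] with x hx hxx
    rwa [← hxx]
  refine ⟨f, hf, fun x => hfIcc ⟨x, rfl⟩, ?_, hlim⟩
  filter_upwards [hlim, hT.map_tendsto hlim] with x hx hTx
  simp only [← Module.End.mul_apply, ← pow_succ'] at hTx
  exact tendsto_nhds_unique hTx ((tendsto_add_atTop_iff_nat 1).2 hx)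

lemma pow_birkhoffSum (hT : IsTransferOperator r μ w T) (f : X → ℝ) (n : ℕ) :
    (T ^ n) (birkhoffSum r f n) =ᵐ[μ] ∑ k ∈ Finset.range n, (T ^ (k + 1)) f := by
  induction n with
  | zero => exact .of_eq (by simp)
  | succ n ih =>
    have hsucc : birkhoffSum r f (n + 1) = f + birkhoffSum r f n ∘ r :=
      funext fun x => birkhoffSum_succ' r f n x
    filter_upwards [ih, (hT.pow n).map_congr (hT.map_comp (birkhoffSum r f n))] with x hx hx'
    rw [hsucc, map_add, Finset.sum_range_succ, add_comm, Pi.add_apply, Pi.add_apply, ← hx, ← hx',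
      pow_succ, Module.End.mul_apply, Module.End.mul_apply]

lemma orbitAverage_mul_le_pow (hT : IsTransferOperator r μ w T)
    (hs : ∀ᵐ x ∂μ, Summable fun n => orbitWeight r w n x) (hg : 0 ≤ g) (hg1 : g ≤ 1) (n : ℕ) :
    orbitAverage r w g * (1 - ∑ k ∈ Finset.range n, (T ^ (k + 1)) (initialShare r w)) ≤ᵐ[μ]
      (T ^ n) (orbitAverage r w g) := by
  have horbit : ∀ᵐ x ∂μ, ∀ k, Summable fun n => orbitWeight r w n (r^[k] x) :=
    ae_all_iff.2 fun k => (hT.measurePreserving.iterate k).quasiMeasurePreserving.ae hs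
  have hle : orbitAverage r w g ∘ r^[n] * (1 - birkhoffSum r (initialShare r w) n) ≤ᵐ[μ]
      orbitAverage r w g :=
    horbit.mono fun x => orbitAverage_iterate_mul_le hT.weight_nonneg hg hg1 n
  filter_upwards [(hT.pow n).map_mono hle, (hT.pow n).map_comp_mul (orbitAverage r w g)
    (1 - birkhoffSum r (initialShare r w) n), hT.pow_birkhoffSum (initialShare r w) n,
    (hT.pow n).map_one] with x hx hcomp hB hone
  rwa [hcomp, Pi.mul_apply, map_sub, Pi.sub_apply, hB, hone] at hx

lemma ae_orbitAverage_mul_le [IsProbabilityMeasure μ]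
    (hT : IsTransferOperator r μ w T) (hs : ∀ᵐ x ∂μ, Summable fun n => orbitWeight r w n x)
    (hg : 0 ≤ g) (hg1 : g ≤ 1) {f : X → ℝ}
    (hlim : ∀ᵐ x ∂μ, Tendsto (fun n => (T ^ n) (orbitAverage r w g) x) atTop (nhds (f x))) :
    ∀ᵐ x ∂μ, orbitAverage r w g x * (1 - ∑' n, (T ^ (n + 1)) (initialShare r w) x) ≤ f x := by
  filter_upwards [hlim, hT.ae_summable_pow_initialShare hs,
    ae_all_iff.2 (hT.orbitAverage_mul_le_pow hs hg hg1)] with x hx hsum hle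
  have htail := ((summable_nat_add_iff 1).2 hsum).hasSum.tendsto_sum_nat
  refine le_of_tendsto_of_tendsto' ((htail.const_sub 1).const_mul _) hx fun n => ?_
  simpa only [Pi.mul_apply, Pi.sub_apply, Pi.one_apply, Finset.sum_apply] using hle n

lemma sum_limits_le_one {ι : Type*} (hT : IsTransferOperator r μ w T) (s : Finset ι)
    {g f : ι → X → ℝ} (hg : ∀ i, 0 ≤ g i) (hg1 : ∑ i ∈ s, g i ≤ 1)
    (hlim : ∀ i ∈ s, ∀ᵐ x ∂μ,
      Tendsto (fun n => (T ^ n) (orbitAverage r w (g i)) x) atTop (nhds (f i x))) :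
    ∀ᵐ x ∂μ, ∑ i ∈ s, f i x ≤ 1 := by
  have hle (n : ℕ) : (T ^ n) (∑ i ∈ s, orbitAverage r w (g i)) ≤ᵐ[μ] 1 := by
    refine ((hT.pow n).map_mono (ae_of_all _ fun x => ?_)).trans (hT.pow n).map_one.le
    simpa only [Finset.sum_apply] using! sum_orbitAverage_le_one s hT.weight_nonneg hg hg1 x
  filter_upwards [(Finset.eventually_all s).2 hlim, ae_all_iff.2 hle] with x hx hlex
  refine le_of_tendsto' (tendsto_finsetSum s hx) fun n => ?_
  simpa only [map_sum, Finset.sum_apply] using! hlex n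

end IsTransferOperator

end HarmonicLimits

section Splitting

variable {X : Type*} [TopologicalSpace X] [HereditarilyLindelofSpace X] [MeasurableSpace X]

lemma infinite_support (ν : Measure X) [NullSingletonClass ν] [NeZero ν] :
    ν.support.Infinite := fun hfin => by
  have h := measure_union_null (hfin.measure_zero ν) ν.measure_compl_support
  rw [Set.union_compl_self] at h
  exact NeZero.ne ν (Measure.measure_univ_eq_zero.1 h)

lemma exists_pairwiseDisjoint_isOpen [T2Space X] (ν : Measure X) [NullSingletonClass ν]
    [NeZero ν] (k : ℕ) :
    ∃ (s : Finset X) (A : X → Set X), s.card = k ∧ (s : Set X).PairwiseDisjoint A ∧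
      ∀ a ∈ s, IsOpen (A a) ∧ ν (A a) ≠ 0 := by
  obtain ⟨s, hs, hcard⟩ := (infinite_support ν).exists_subset_card_eq k
  obtain ⟨A, hA, hdisj⟩ := s.finite_toSet.t2_separation
  refine ⟨s, A, hcard, hdisj, fun a ha => ⟨(hA a).2, ?_⟩⟩
  exact ((Measure.mem_support_iff_forall a).1 (hs ha) _ ((hA a).2.mem_nhds (hA a).1)).ne'

lemma sum_indicator_one_le_one {ι α : Type*} {s : Finset ι} {A : ι → Set α}
    (hA : (s : Set ι).PairwiseDisjoint A) :
    ∑ i ∈ s, (A i).indicator (1 : α → ℝ) ≤ 1 := by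
  intro x
  rw [Finset.sum_apply, ← Finset.indicator_biUnion_apply s A hA]
  exact Set.indicator_le_self' (fun _ _ => zero_le_one) x

end Splitting

namespace IsTransferOperator

variable {X : Type*} [MeasurableSpace X] {μ : Measure X} [IsProbabilityMeasure μ] {r : X → X}
  {w : X → ℝ} {T : Module.End ℝ (X → ℝ)}

lemma exists_measure_ne_zero_le_limit (hT : IsTransferOperator r μ w T)
    (hs : ∀ᵐ x ∂μ, Summable fun n => orbitWeight r w n x) :
    ∃ ε > 0, ∃ B : Set X, μ B ≠ 0 ∧ ∀ (A : Set X) (f : X → ℝ),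
      (∀ᵐ x ∂μ, Tendsto (fun n => (T ^ n) (orbitAverage r w (A.indicator 1)) x) atTop
        (nhds (f x))) → ∀ᵐ x ∂μ, x ∈ A ∩ B → ε ≤ f x := by
  set q : X → ℝ := fun x => 1 - ∑' n, (T ^ (n + 1)) (initialShare r w) x
  obtain ⟨ε, hε, hB⟩ : ∃ ε > 0, μ {x | ε ≤ initialShare r w x * q x} ≠ 0 := by
    by_contra! hnull
    refine hT.not_one_le_tsum_pow_succ_initialShare hs ?_
    have hlt (n : ℕ) : ∀ᵐ x ∂μ, initialShare r w x * q x < 1 / (n + 1 : ℝ) :=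
      (measure_eq_zero_iff_ae_notMem.1 (hnull _ Nat.one_div_pos_of_nat)).mono fun _ h => not_le.1 h
    filter_upwards [hs, ae_all_iff.2 hlt] with x hsx hx
    by_contra! hq
    obtain ⟨n, hn⟩ := exists_nat_one_div_lt
      (mul_pos (initialShare_pos hT.weight_nonneg hsx) (sub_pos.2 hq))
    exact (hx n).not_gt hn
  refine ⟨ε, hε, {x | ε ≤ initialShare r w x * q x}, hB, fun A f hlim => ?_⟩
  have hA : 0 ≤ A.indicator (1 : X → ℝ) := Set.indicator_nonneg fun _ _ => zero_le_one
  have hA1 : A.indicator (1 : X → ℝ) ≤ 1 := Set.indicator_le_self' fun _ _ => zero_le_one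
  filter_upwards [hT.ae_orbitAverage_mul_le hs hA hA1 hlim,
    hT.measurePreserving.quasiMeasurePreserving.ae hs] with x hfx hsx hxA
  have hq : 0 < q x := pos_of_mul_pos_right (hε.trans_le hxA.2)
    (initialShare_nonneg hT.weight_nonneg x)
  have hshare : initialShare r w x ≤ orbitAverage r w (A.indicator 1) x := by
    rw [orbitAverage_eq_add hT.weight_nonneg hA hA1 hsx, Set.indicator_of_mem hxA.1, Pi.one_apply,
      mul_one]
    exact le_add_of_nonneg_right (mul_nonneg
      (sub_nonneg.2 (initialShare_le_one hT.weight_nonneg x))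
      (orbitAverage_nonneg hT.weight_nonneg hA _))
  calc ε ≤ initialShare r w x * q x := hxA.2
    _ ≤ orbitAverage r w (A.indicator 1) x * q x := mul_le_mul_of_nonneg_right hshare hq.le
    _ ≤ f x := hfx

theorem exists_nonconstant_fixed_point [TopologicalSpace X] [T2Space X]
    [HereditarilyLindelofSpace X] [OpensMeasurableSpace X] [NullSingletonClass μ]
    (hT : IsTransferOperator r μ w T)
    (hs : ∀ᵐ x ∂μ, Summable fun n => orbitWeight r w n x) :
    ∃ f : X → ℝ, Measurable f ∧ (∀ x, f x ∈ Set.Icc 0 1) ∧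
      (¬ ∃ c : ℝ, f =ᵐ[μ] fun _ => c) ∧ T f =ᵐ[μ] f := by
  obtain ⟨ε, hε, B, hB, hlower⟩ := hT.exists_measure_ne_zero_le_limit hs
  obtain ⟨k, hk⟩ := exists_nat_gt ε⁻¹
  have : NeZero (μ.restrict B) := ⟨mt Measure.restrict_eq_zero.1 hB⟩
  obtain ⟨s, A, hcard, hdisj, hA⟩ := exists_pairwiseDisjoint_isOpen (μ.restrict B) k
  have hg (a : X) : 0 ≤ (A a).indicator (1 : X → ℝ) := Set.indicator_nonneg fun _ _ => zero_le_one
  by_contra hconst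
  have hlimits (a : X) (ha : a ∈ s) : ∃ c : ℝ, ε ≤ c ∧ ∀ᵐ x ∂μ,
      Tendsto (fun n => (T ^ n) (orbitAverage r w ((A a).indicator 1)) x) atTop (nhds c) := by
    obtain ⟨f, hf, hfIcc, hTf, hlim⟩ := hT.exists_ae_tendsto_pow_orbitAverage hs
      (measurable_one.indicator (hA a ha).1.measurableSet) (hg a)
      (Set.indicator_le_self' fun _ _ => zero_le_one)
    obtain ⟨c, hc⟩ : ∃ c : ℝ, f =ᵐ[μ] fun _ => c := by
      by_contra hne
      exact hconst ⟨f, hf, hfIcc, hne, hTf⟩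
    have hlimc := (hc.and hlim).mono fun x hx => hx.1 ▸ hx.2
    refine ⟨c, ?_, hlimc⟩
    have hAB := (hA a ha).2
    rw [Measure.restrict_apply (hA a ha).1.measurableSet] at hAB
    obtain ⟨x, hx, hle⟩ := (frequently_ae_mem_iff.2 hAB |>.and_eventually
      (hlower (A a) (fun _ => c) hlimc)).exists
    exact hle hx
  choose! c hc hlim using hlimits
  obtain ⟨-, hsum⟩ := (hT.sum_limits_le_one s hg (sum_indicator_one_le_one hdisj) hlim).exists
  have hle := s.card_nsmul_le_sum c ε hc
  rw [hcard, nsmul_eq_mul] at hle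
  have := (inv_lt_iff_one_lt_mul₀ hε).1 hk
  linarith

end IsTransferOperator

section FiberAverages

variable {X : Type*} {r : X → X} {f g : X → ℝ} {x : X}

/-- The operator averaging a function over the fibres of `r`, the transfer operator of `r` with
constant weight. The average over an empty or infinite fibre is `0`. -/
def fiberAverage (r : X → X) : Module.End ℝ (X → ℝ) where
  toFun f x := (Nat.card (r ⁻¹' {x}) : ℝ)⁻¹ * ∑' y : r ⁻¹' {x}, f y
  map_add' f g := by
    ext x
    cases finite_or_infinite (r ⁻¹' {x})
    · simp [Summable.tsum_add .of_finite .of_finite, mul_add]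
    · simp [-Nat.card_coe_set_eq]
  map_smul' c f := by
    ext x
    simp [tsum_mul_left, mul_left_comm]

lemma fiberAverage_apply :
    fiberAverage r f x = (Nat.card (r ⁻¹' {x}) : ℝ)⁻¹ * ∑' y : r ⁻¹' {x}, f y := rfl

lemma fiberAverage_mono (h : ∀ y, r y = x → f y ≤ g y) :
    fiberAverage r f x ≤ fiberAverage r g x := by
  cases finite_or_infinite (r ⁻¹' {x})
  · exact mul_le_mul_of_nonneg_left
      (Summable.tsum_le_tsum (fun y => h y y.2) .of_finite .of_finite) (by positivity)
  · simp [fiberAverage_apply]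

lemma fiberAverage_congr (h : ∀ y, r y = x → f y = g y) :
    fiberAverage r f x = fiberAverage r g x :=
  (fiberAverage_mono fun y hy => (h y hy).le).antisymm
    (fiberAverage_mono fun y hy => (h y hy).ge)

lemma fiberAverage_const (hx : Nat.card (r ⁻¹' {x}) ≠ 0) (c : ℝ) :
    fiberAverage r (fun _ => c) x = c := by
  rw [fiberAverage_apply, tsum_const, nsmul_eq_mul, inv_mul_cancel_left₀ (Nat.cast_ne_zero.2 hx)]

lemma fiberAverage_comp_mul (h f : X → ℝ) :
    fiberAverage r (h ∘ r * f) = h * fiberAverage r f := by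
  ext x
  have hfiber : ∀ y : r ⁻¹' {x}, (h ∘ r * f) y = h x * f y := by
    rintro ⟨y, rfl⟩
    rfl
  simp only [fiberAverage_apply, hfiber, tsum_mul_left, Pi.mul_apply, mul_left_comm]

lemma tendsto_fiberAverage {F : ℕ → X → ℝ}
    (h : ∀ y, r y = x → Tendsto (fun n => F n y) atTop (nhds (f y))) :
    Tendsto (fun n => fiberAverage r (F n) x) atTop (nhds (fiberAverage r f x)) := by
  simp only [fiberAverage_apply]
  cases finite_or_infinite (r ⁻¹' {x})
  · have := Fintype.ofFinite (r ⁻¹' {x})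
    simp only [tsum_fintype]
    exact (tendsto_finsetSum _ fun (y : r ⁻¹' {x}) _ => h y y.2).const_mul _
  · simp

lemma eq_zero_of_fiberAverage_eq_zero (hf : 0 ≤ f) (hx : Nat.card (r ⁻¹' {x}) ≠ 0)
    (h0 : fiberAverage r f x = 0) {y : X} (hy : r y = x) : f y = 0 := by
  have := (Nat.card_ne_zero.1 hx).2
  have hsum : ∑' z : r ⁻¹' {x}, f z = 0 :=
    (mul_eq_zero.1 h0).resolve_left (inv_ne_zero (Nat.cast_ne_zero.2 hx))
  exact congrFun ((hasSum_zero_iff_of_nonneg fun z : r ⁻¹' {x} => hf z).1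
    (Summable.of_finite.hasSum_iff.2 hsum)) ⟨y, hy⟩

lemma fiberAverage_indicator_singleton (y : X) :
    fiberAverage r (({y} : Set X).indicator 1) =
      ({r y} : Set X).indicator fun _ => (Nat.card (r ⁻¹' {r y}) : ℝ)⁻¹ := by
  ext x
  by_cases hx : x = r y
  · subst hx
    have hsum : ∑' z : r ⁻¹' {r y}, ({y} : Set X).indicator (1 : X → ℝ) z = 1 := by
      refine (tsum_eq_single (⟨y, rfl⟩ : r ⁻¹' {r y}) fun z hz =>
        Set.indicator_of_notMem (s := {y}) (fun h => hz (Subtype.ext h)) 1).trans ?_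
      exact Set.indicator_of_mem (s := {y}) rfl 1
    rw [fiberAverage_apply, hsum, mul_one, Set.indicator_of_mem (s := {r y}) rfl]
  · have hzero (z : X) (hz : r z = x) : ({y} : Set X).indicator (1 : X → ℝ) z = 0 :=
      Set.indicator_of_notMem (s := {y}) (by rintro rfl; exact hx hz.symm) 1
    rw [Set.indicator_of_notMem (s := {r y}) hx, fiberAverage_congr hzero]
    exact congrFun (map_zero (fiberAverage r)) x

end FiberAverages

section StrongInvariance

variable {X : Type*} [MeasurableSpace X] {μ : Measure X} {r : X → X} {f : X → ℝ}

lemma exists_bounded_measurable_ae_eq (hf : MemLp f ⊤ μ) :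
    ∃ g : X → ℝ, Measurable g ∧ (∃ C, ∀ x, |g x| ≤ C) ∧ f =ᵐ[μ] g := by
  have hbound : ∀ᵐ x ∂μ, f x ∈ Set.Icc (-lpNorm f ⊤ μ) (lpNorm f ⊤ μ) :=
    (ae_le_lpNorm_exponent_top hf).mono fun x hx => abs_le.1 hx
  obtain ⟨g, hg, hrange, hfg⟩ := hf.1.aemeasurable.exists_ae_eq_range_subset hbound
    ⟨0, neg_nonpos.2 lpNorm_nonneg, lpNorm_nonneg⟩
  exact ⟨g, hg, ⟨_, fun x => abs_le.2 (hrange ⟨x, rfl⟩)⟩, hfg⟩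

namespace StronglyInvariant

lemma integral_fiberAverage (hinv : StronglyInvariant r μ) (hf : Measurable f)
    (hb : ∃ C, ∀ x, |f x| ≤ C) : ∫ x, fiberAverage r f x ∂μ = ∫ x, f x ∂μ :=
  (hinv f hf hb).symm

/-- Adding a constant makes `∫ f` nonzero, and a function with nonzero integral is integrable. -/
lemma integrable_fiberAverage [IsProbabilityMeasure μ] (hinv : StronglyInvariant r μ)
    (hcard : ∀ x, Nat.card (r ⁻¹' {x}) ≠ 0) (hf : Measurable f) (hb : ∃ C, ∀ x, |f x| ≤ C) :
    Integrable (fiberAverage r f) μ := by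
  obtain ⟨C, hC⟩ := hb
  have hfi : Integrable f μ := .of_bound hf.aestronglyMeasurable C (ae_of_all _ hC)
  obtain ⟨c, hc⟩ : ∃ c : ℝ, ∫ x, f x ∂μ + c = 1 := ⟨_, add_sub_cancel _ 1⟩
  have hsum : fiberAverage r (f + fun _ => c) = fiberAverage r f + fun _ => c := by
    ext x
    rw [map_add, Pi.add_apply, Pi.add_apply, fiberAverage_const (hcard x)]
  have hone : ∫ x, fiberAverage r (f + fun _ => c) x ∂μ = 1 := by
    rw [hinv.integral_fiberAverage (hf.add measurable_const)
      ⟨C + |c|, fun x => (abs_add_le _ _).trans (add_le_add_left (hC x) _)⟩]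
    simp only [Pi.add_apply, integral_add hfi (integrable_const c), integral_const, probReal_univ,
      one_smul, hc]
  have hint := Integrable.of_integral_ne_zero (hone.trans_ne one_ne_zero)
  rw [hsum] at hint
  simpa using hint.sub (integrable_const c)

lemma ae_forall_fiber [IsProbabilityMeasure μ] (hinv : StronglyInvariant r μ)
    (hcard : ∀ x, Nat.card (r ⁻¹' {x}) ≠ 0) {p : X → Prop} (hp : ∀ᵐ x ∂μ, p x) :
    ∀ᵐ x ∂μ, ∀ y, r y = x → p y := by
  obtain ⟨N, hpN, hN, hN0⟩ := exists_measurable_superset_of_null (ae_iff.1 hp)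
  have hmeas : Measurable (N.indicator (1 : X → ℝ)) := measurable_one.indicator hN
  have hnonneg : 0 ≤ N.indicator (1 : X → ℝ) := Set.indicator_nonneg fun _ _ => zero_le_one
  have hb : ∃ C, ∀ x, |N.indicator (1 : X → ℝ) x| ≤ C := ⟨1, fun x => by
    rw [abs_of_nonneg (hnonneg x)]
    exact Set.indicator_le_self' (fun _ _ => zero_le_one) x⟩
  have havg : 0 ≤ fiberAverage r (N.indicator 1) := fun x => by
    simpa using fiberAverage_mono (r := r) (x := x) fun y _ => hnonneg y
  have hint : ∫ x, fiberAverage r (N.indicator 1) x ∂μ = 0 := by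
    rw [hinv.integral_fiberAverage hmeas hb, integral_indicator_one hN, measureReal_def, hN0,
      ENNReal.toReal_zero]
  filter_upwards [(integral_eq_zero_iff_of_nonneg havg
    (hinv.integrable_fiberAverage hcard hmeas hb)).1 hint] with x hx y hy
  by_contra hpy
  have hy0 := eq_zero_of_fiberAverage_eq_zero hnonneg (hcard x) hx hy
  simp [hpN hpy] at hy0

lemma fiberAverage_ae_eq [IsProbabilityMeasure μ] (hinv : StronglyInvariant r μ)
    (hcard : ∀ x, Nat.card (r ⁻¹' {x}) ≠ 0) {g : X → ℝ} (h : f =ᵐ[μ] g) :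
    fiberAverage r f =ᵐ[μ] fiberAverage r g :=
  (hinv.ae_forall_fiber hcard h).mono fun _ hx => fiberAverage_congr hx

lemma memLp_fiberAverage [IsProbabilityMeasure μ] (hinv : StronglyInvariant r μ)
    (hcard : ∀ x, Nat.card (r ⁻¹' {x}) ≠ 0) (hf : MemLp f ⊤ μ) :
    MemLp (fiberAverage r f) ⊤ μ := by
  obtain ⟨g, hg, ⟨C, hC⟩, hfg⟩ := exists_bounded_measurable_ae_eq hf
  refine MemLp.ae_eq (hinv.fiberAverage_ae_eq hcard hfg).symm (memLp_top_of_bound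
    (hinv.integrable_fiberAverage hcard hg ⟨C, hC⟩).1 C (ae_of_all _ fun x => ?_))
  rw [Real.norm_eq_abs, abs_le]
  constructor
  · rw [← fiberAverage_const (hcard x) (-C)]
    exact fiberAverage_mono fun y _ => (abs_le.1 (hC y)).1
  · rw [← fiberAverage_const (hcard x) C]
    exact fiberAverage_mono fun y _ => (abs_le.1 (hC y)).2

lemma isTransferOperator [IsProbabilityMeasure μ] (hinv : StronglyInvariant r μ)
    (hcard : ∀ x, Nat.card (r ⁻¹' {x}) ≠ 0) (hr : MeasurePreserving r μ μ) :
    IsTransferOperator r μ 1 (fiberAverage r) where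
  measurePreserving := hr
  weight_nonneg := zero_le_one
  measurable_weight := measurable_one
  memLp_weight := memLp_top_const 1
  map_mono h := (hinv.ae_forall_fiber hcard h).mono fun _ => fiberAverage_mono
  map_one := ae_of_all _ fun x => fiberAverage_const (hcard x) 1
  map_comp_mul h f := .of_eq (fiberAverage_comp_mul h f)
  memLp_map := hinv.memLp_fiberAverage hcard
  integral_map {f} hf := by
    obtain ⟨g, hg, hb, hfg⟩ := exists_bounded_measurable_ae_eq hf
    rw [integral_congr_ae (hinv.fiberAverage_ae_eq hcard hfg), hinv.integral_fiberAverage hg hb,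
      ← integral_congr_ae hfg]
    simp only [Pi.one_apply, one_mul]
  map_tendsto h := (hinv.ae_forall_fiber hcard h).mono fun _ => tendsto_fiberAverage

end StronglyInvariant

end StrongInvariance

section Atoms

variable {X : Type*} [MeasurableSpace X] {μ : Measure X} {r : X → X}

lemma ae_eq_comp_of_le_comp (hr : MeasurePreserving r μ μ) {f : X → ℝ} (hf : Integrable f μ)
    (hle : f ≤ᵐ[μ] f ∘ r) : f =ᵐ[μ] f ∘ r := by
  refine (integral_eq_iff_of_ae_le hf (hr.integrable_comp_of_integrable hf) hle).1 ?_
  have hmap := integral_map hr.aemeasurable (hr.map_eq.symm ▸ hf.aestronglyMeasurable)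
  rwa [hr.map_eq] at hmap

lemma measurable_measureReal_singleton [MeasurableSingletonClass X] [IsFiniteMeasure μ] :
    Measurable fun x => μ.real {x} := by
  refine measurable_of_Ici fun t => ?_
  rcases le_or_gt t 0 with ht | ht
  · convert MeasurableSet.univ using 1
    exact Set.eq_univ_of_forall fun x => ht.trans measureReal_nonneg
  · refine Set.Finite.measurableSet ((Measure.finite_const_le_meas_of_disjoint_iUnion μ
      (ENNReal.ofReal_pos.2 ht) (fun x : X => measurableSet_singleton x)
      (fun x y hxy => Set.disjoint_singleton.2 hxy) (measure_ne_top μ _)).subset fun x hx => ?_)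
    exact ENNReal.ofReal_le_of_le_toReal hx

namespace StronglyInvariant

variable [MeasurableSingletonClass X]

lemma measureReal_singleton (hinv : StronglyInvariant r μ) (y : X) :
    μ.real {y} = (Nat.card (r ⁻¹' {r y}) : ℝ)⁻¹ * μ.real {r y} := by
  have hint := hinv.integral_fiberAverage (f := ({y} : Set X).indicator 1)
    (measurable_one.indicator (measurableSet_singleton y))
    ⟨1, fun x => by by_cases hx : x ∈ ({y} : Set X) <;> simp [hx]⟩
  rw [fiberAverage_indicator_singleton, integral_indicator_const _ (measurableSet_singleton _),
    integral_indicator_one (measurableSet_singleton _)] at hint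
  rw [← hint, smul_eq_mul, mul_comm]

lemma ae_card_fiber_eq_one [IsProbabilityMeasure μ] (hinv : StronglyInvariant r μ)
    (hcard : ∀ x, Nat.card (r ⁻¹' {x}) ≠ 0) (hr : Ergodic r μ) {a : X} (ha : μ {a} ≠ 0) :
    ∀ᵐ y ∂μ, Nat.card (r ⁻¹' {r y}) = 1 := by
  have hle (y : X) : μ.real {y} ≤ μ.real {r y} := by
    rw [hinv.measureReal_singleton y]
    exact mul_le_of_le_one_left measureReal_nonneg
      (inv_le_one_of_one_le₀ (Nat.one_le_cast.2 (Nat.one_le_iff_ne_zero.2 (hcard _))))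
  have hmass : Integrable (fun x => μ.real {x}) μ :=
    .of_bound measurable_measureReal_singleton.aestronglyMeasurable 1
      (ae_of_all _ fun x => (abs_of_nonneg measureReal_nonneg).trans_le measureReal_le_one)
  have hcomp := ae_eq_comp_of_le_comp hr.toMeasurePreserving hmass (ae_of_all _ hle)
  obtain ⟨c, hc⟩ := hr.ae_eq_const_of_ae_eq_comp_ae
    measurable_measureReal_singleton.aestronglyMeasurable hcomp.symm
  have hpos : 0 < c := by
    obtain ⟨x, rfl, hx⟩ := ((frequently_ae_mem_iff.2 ha).and_eventually hc).exists
    exact (ENNReal.toReal_pos ha (measure_ne_top μ _)).trans_eq hx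
  filter_upwards [hcomp, hc] with y hy hyc
  have hmul := hinv.measureReal_singleton y
  rw [← show μ.real {y} = μ.real {r y} from hy, show μ.real {y} = c from hyc,
    eq_comm, mul_eq_right₀ hpos.ne', inv_eq_one, Nat.cast_eq_one] at hmul
  exact hmul

lemma nullSingletonClass [IsProbabilityMeasure μ] (hinv : StronglyInvariant r μ)
    (hcard : ∀ x, Nat.card (r ⁻¹' {x}) ≠ 0) (hr : Ergodic r μ) {w : X → ℝ}
    (hw : fiberAverage r w =ᵐ[μ] 1) (hne : ¬ w =ᵐ[μ] 1) : NullSingletonClass μ := by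
  refine ⟨fun a => of_not_not fun ha => hne ?_⟩
  filter_upwards [hinv.ae_card_fiber_eq_one hcard hr ha,
    hr.toMeasurePreserving.quasiMeasurePreserving.ae hw] with y hy hwy
  have hsub := (Nat.card_eq_one_iff_unique.1 hy).1
  have hconst (z : X) (hz : r z = r y) : w z = w y :=
    congrArg (fun u : r ⁻¹' {r y} => w u) (Subsingleton.elim ⟨z, hz⟩ ⟨y, rfl⟩)
  rwa [fiberAverage_congr hconst, fiberAverage_const (hcard _)] at hwy

end StronglyInvariant

end Atoms

section QuadratureMirrorFilters

variable {X : Type*} [MeasurableSpace X] {μ : Measure X} {r : X → X}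

lemma StronglyInvariant.exists_nonconstant_fixed_point [TopologicalSpace X] [T2Space X]
    [HereditarilyLindelofSpace X] [OpensMeasurableSpace X] [IsProbabilityMeasure μ]
    (hinv : StronglyInvariant r μ) (hcard : ∀ x, Nat.card (r ⁻¹' {x}) ≠ 0) (hr : Ergodic r μ)
    {w : X → ℝ} (hw : 0 ≤ w) (hwm : Measurable w) (hwb : MemLp w ⊤ μ)
    (hw1 : fiberAverage r w =ᵐ[μ] 1) (hne : ¬ w =ᵐ[μ] 1) :
    ∃ f : X → ℝ, Measurable f ∧ (∀ x, f x ∈ Set.Icc 0 1) ∧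
      (¬ ∃ c : ℝ, f =ᵐ[μ] fun _ => c) ∧ fiberAverage r (w * f) =ᵐ[μ] f := by
  have hT : IsTransferOperator r μ w (fiberAverage r * LinearMap.mulLeft ℝ w) := by
    simpa only [one_mul] using
      (hinv.isTransferOperator hcard hr.toMeasurePreserving).mul_mulLeft hw hwm hwb hw1
  have hwi := hwb.integrable le_top
  have := hinv.nullSingletonClass hcard hr hw1 hne
  exact hT.exists_nonconstant_fixed_point (ae_summable_orbitWeight hr hw hwm hwi
    (integral_sqrt_lt_one hw hwi hT.integral_weight hne))

lemma BddMeasC.memLp_norm_sq {m : X → ℂ} (hm : BddMeasC m) :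
    MemLp (fun x => ‖m x‖ ^ 2) ⊤ μ := by
  obtain ⟨hmeas, C, hC⟩ := hm
  refine memLp_top_of_bound (hmeas.norm.pow_const 2).aestronglyMeasurable (C ^ 2)
    (ae_of_all _ fun x => ?_)
  rw [norm_pow, norm_norm]
  exact pow_le_pow_left₀ (norm_nonneg _) (hC x) 2

end QuadratureMirrorFilters

theorem exists_nonconstant_transfer_fixed_point_general
    {X : Type*} [TopologicalSpace X] [T2Space X] [HereditarilyLindelofSpace X]
    [MeasurableSpace X] [OpensMeasurableSpace X]
    (r : X → X) (hsurj : Function.Surjective r) (hfin : ∀ x : X, (r ⁻¹' {x}).Finite)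
    (μ : Measure X) [IsProbabilityMeasure μ] (hinv : StronglyInvariant r μ) (herg : Ergodic r μ)
    (m0 : X → ℂ) (hm0 : BddMeasC m0) (hqmf : IsQMF r μ m0) (hne1 : ¬ (∀ᵐ x ∂μ, ‖m0 x‖ = 1)) :
    ∃ f : X → ℂ, BddMeasC f ∧ (¬ ∃ c : ℂ, f =ᵐ[μ] fun _ => c) ∧
      ∀ᵐ x ∂μ, ((Nat.card (r ⁻¹' {x}) : ℂ))⁻¹ *
          ∑' y : (r ⁻¹' {x}), (‖m0 (y : X)‖ ^ 2 : ℂ) * f (y : X) = f x := by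
  have hcard (x : X) : Nat.card (r ⁻¹' {x}) ≠ 0 :=
    Nat.card_ne_zero.2 ⟨(hsurj x).elim fun y hy => ⟨y, hy⟩, hfin x⟩
  have hw1 : ¬ (fun x => ‖m0 x‖ ^ 2) =ᵐ[μ] 1 := fun h =>
    hne1 (h.mono fun x => (pow_eq_one_iff_of_nonneg (norm_nonneg _) two_ne_zero).1)
  obtain ⟨f, hf, hfIcc, hne, hfix⟩ := hinv.exists_nonconstant_fixed_point hcard herg
    (fun x => sq_nonneg _) (hm0.1.norm.pow_const 2) hm0.memLp_norm_sq hqmf hw1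
  refine ⟨fun x => f x, ⟨Complex.measurable_ofReal.comp hf, 1, fun x => ?_⟩, ?_, ?_⟩
  · rw [Complex.norm_of_nonneg (hfIcc x).1]
    exact (hfIcc x).2
  · rintro ⟨c, hc⟩
    exact hne ⟨c.re, hc.mono fun x hx => congrArg Complex.re hx⟩
  · filter_upwards [hfix] with x hx
    rw [← hx, fiberAverage_apply]
    push_cast [Pi.mul_apply, Complex.ofReal_tsum]
    rfl

/-- Under the hypotheses of the main theorem, the transfer operator
`R_{m0} f(x) = (1/#r⁻¹(x)) Σ_{r(y)=x} |m0(y)|² f(y)` has a bounded measurable fixed point which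
is not μ-a.e. constant. -/
theorem exists_nonconstant_transfer_fixed_point
    {X : Type*} [MetricSpace X] [CompactSpace X] [MeasurableSpace X] [BorelSpace X]
    (r : X → X) (hr : Measurable r) (hsurj : Function.Surjective r)
    (hfin : ∀ x : X, (r ⁻¹' {x}).Finite)
    (μ : Measure X) [IsProbabilityMeasure μ] (hinv : StronglyInvariant r μ)
    (herg : Ergodic r μ)
    (m0 : X → ℂ) (hm0 : BddMeasC m0) (hqmf : IsQMF r μ m0)
    (hne1 : ¬ (∀ᵐ x ∂μ, ‖m0 x‖ = 1))
    (hns : μ {x | m0 x = 0} = 0)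
    (hlog : Integrable (fun x => Real.log (‖m0 x‖ ^ 2)) μ) :
    ∃ f : X → ℂ, BddMeasC f ∧ (¬ ∃ c : ℂ, f =ᵐ[μ] fun _ => c) ∧
      ∀ᵐ x ∂μ, ((Nat.card (r ⁻¹' {x}) : ℂ))⁻¹ *
          ∑' y : (r ⁻¹' {x}), (‖m0 (y : X)‖ ^ 2 : ℂ) * f (y : X) = f x := by
  exact exists_nonconstant_transfer_fixed_point_general r hsurj hfin μ hinv herg m0 hm0 hqmf hne1
end
end

section
/- Let X be a compact metric space, r : X → X a Borel measurable, onto, finite-to-one map, μ a strongly invariant Borel probability measure with respect to which r is ergodic, and m0 ∈ L∞(X) a non-singular QMF filter with |m0| not μ-a.e. equal to 1 and log|m0|² ∈ L¹(X,μ). Let (X_∞, μ_∞) be the solenoid with its path-space measure, and let A_0 ⊆ X be a measurable set with μ(A_0) > 0 such that Σ_{m≥1} ∫_{A_0} |m0(x)⋯m0(r^{m-1}(x))|² dμ(x) < ∞. Then for μ_∞-a.e. z = (z_n)_{n≥0} ∈ X_∞, the set {n : z_n ∈ A_0} is finite, i.e. there exists k_z such that z_n ∉ A_0 for all n ≥ k_z.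 -/
open MeasureTheory Filter

noncomputable section

/-- The solenoid of `r`: the set of backward orbits `(x₀, x₁, …)` with `r(x_{n+1}) = x_n`. -/
def Solenoid {X : Type*} (r : X → X) : Set (ℕ → X) :=
  {z | ∀ n : ℕ, r (z (n + 1)) = z n}

/-- The shift automorphism `r_∞(x₀, x₁, …) = (r(x₀), x₀, x₁, …)` on the solenoid. -/
def rInf {X : Type*} (r : X → X) (z : Solenoid r) : Solenoid r :=
  ⟨fun n => Nat.casesOn n (r (z.1 0)) z.1, by
    intro n
    cases n with
    | zero => rfl
    | succ m => exact z.2 m⟩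

/-- `ν` is the path-space measure on the solenoid built from the transition weights
`W(x) = |m0(x)|²/#r⁻¹(r(x))`: for every cylinder function `g` of the first `n+1` coordinates,
`∫ g dν = ∫_X Σ_{paths (x, z₁, …, z_n) starting at x} W(z₁)⋯W(z_n) g(x, z₁, …, z_n) dμ(x)`,
i.e. `∫ g dν = ∫_X ∫_{Ω_x} g dP_x dμ(x)` with `P_x` the path measures. -/
def IsPathMeasure {X : Type*} [MeasurableSpace X] (r : X → X) (μ : Measure X) (m0 : X → ℂ)
    (ν : Measure (Solenoid r)) : Prop :=
  ∀ (n : ℕ) (g : (Fin (n + 1) → X) → ℝ), Measurable g → (∃ C, ∀ v, |g v| ≤ C) →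
    ∫ z, g (fun i => z.1 (i : ℕ)) ∂ν =
      ∫ x, ∑' q : {q : Fin (n + 1) → X //
            q 0 = x ∧ ∀ i : Fin n, r (q i.succ) = q i.castSucc},
          (∏ i : Fin n,
            ‖m0 (q.1 i.succ)‖ ^ 2 / (Nat.card (r ⁻¹' {r (q.1 i.succ)}) : ℝ)) * g q.1 ∂μ

/-!
Let `R f (x) = Σ_{r(y)=x} W(y) f(y)` be the transfer operator with `W(y) = |m₀(y)|² / #r⁻¹(r(y))`.
Summing over backward paths of length `n` computes `Rⁿ`, so the law of `z_n` under the path measure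
is `A ↦ ∫ Rⁿ 1_A dμ`. Averaging over fibres preserves the integral, hence
`∫ g · R f dμ = ∫ (g ∘ r) |m₀|² f dμ`: each step of a backward path turns into one more factor of
`|m₀(x) ⋯ m₀(r^{n-1}(x))|²` along the forward orbit of its endpoint. The masses
`μ_∞(z_n ∈ A₀)` are therefore the terms of the given series, and Borel–Cantelli applies.
-/

section

open scoped ENNReal NNReal

variable {X : Type*} {r : X → X}

/-- The transfer (Ruelle) operator `(R_W f)(x) = Σ_{r(y)=x} W(y) f(y)`. It acts on `ℝ≥0∞`-valued
functions so that the sum makes sense on every fibre; the weight is finite-valued. -/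
def ruelleOperator (r : X → X) (W : X → ℝ≥0) (f : X → ℝ≥0∞) (x : X) : ℝ≥0∞ :=
  ∑' y : r ⁻¹' {x}, W y * f y

theorem ruelleOperator_add (W : X → ℝ≥0) (f g : X → ℝ≥0∞) :
    ruelleOperator r W (f + g) = ruelleOperator r W f + ruelleOperator r W g := by
  funext x
  simp only [ruelleOperator, Pi.add_apply, mul_add, ENNReal.tsum_add]

theorem ruelleOperator_tsum {ι : Type*} (W : X → ℝ≥0) (f : ι → X → ℝ≥0∞) :
    (ruelleOperator r W fun y => ∑' i, f i y) = fun x => ∑' i, ruelleOperator r W (f i) x := by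
  funext x
  simp only [ruelleOperator, ← ENNReal.tsum_mul_left]
  exact ENNReal.tsum_comm

theorem ruelleOperator_mul_weight (W v : X → ℝ≥0) (f : X → ℝ≥0∞) :
    ruelleOperator r (W * v) f = ruelleOperator r W fun y => v y * f y := by
  funext x
  simp only [ruelleOperator, Pi.mul_apply, ENNReal.coe_mul, mul_assoc]

theorem mul_ruelleOperator (W : X → ℝ≥0) (g f : X → ℝ≥0∞) (x : X) :
    g x * ruelleOperator r W f x = ruelleOperator r W (fun y => g (r y) * f y) x := by
  simp only [ruelleOperator, ← ENNReal.tsum_mul_left]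
  refine tsum_congr fun y => ?_
  rw [show r y = x from y.2, mul_left_comm]

/-- The set `Ω_x` of backward paths `(q₀, …, q_n)` of length `n` starting at `q₀ = x`, in the
indexing used by `IsPathMeasure`. -/
def backwardPaths (r : X → X) (n : ℕ) (x : X) : Set (Fin (n + 1) → X) :=
  {q | q 0 = x ∧ ∀ i : Fin n, r (q i.succ) = q i.castSucc}

/-- Splitting off the starting point of a backward path: what remains is a preimage `y` of `x` and
a backward path starting at `y`. -/
def backwardPathsSuccEquiv (r : X → X) (n : ℕ) (x : X) :
    (Σ y : r ⁻¹' {x}, backwardPaths r n y) ≃ backwardPaths r (n + 1) x where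
  toFun p := ⟨Fin.cons x p.2.1, rfl, Fin.cases
    ((congrArg r p.2.2.1).trans p.1.2) fun i => p.2.2.2 i⟩
  invFun q := ⟨⟨q.1 1, (q.2.2 0).trans q.2.1⟩, Fin.tail q.1, rfl, fun i => q.2.2 i.succ⟩
  left_inv := by
    rintro ⟨⟨_, hy⟩, q, hq₀, hq⟩
    cases hq₀
    rfl
  right_inv := by
    rintro ⟨q, rfl, hq⟩
    exact Subtype.ext (Fin.cons_self_tail q)

theorem tsum_backwardPaths (W : X → ℝ≥0) (f : X → ℝ≥0∞) (n : ℕ) (x : X) :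
    ∑' q : backwardPaths r n x, (∏ i : Fin n, (W (q.1 i.succ) : ℝ≥0∞)) * f (q.1 (Fin.last n)) =
      (ruelleOperator r W)^[n] f x := by
  induction n generalizing x with
  | zero =>
    have : Unique (backwardPaths r 0 x) :=
      { default := ⟨fun _ => x, rfl, fun i => i.elim0⟩
        uniq := fun q => Subtype.ext <| funext fun i => by rw [Fin.fin_one_eq_zero i, q.2.1] }
    rw [tsum_eq_single default fun q hq => absurd (Subsingleton.elim q default) hq]
    simp [(default : backwardPaths r 0 x).2.1]
  | succ n ih =>
    rw [Function.iterate_succ_apply', ← (backwardPathsSuccEquiv r n x).tsum_eq,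
      ENNReal.tsum_sigma', ruelleOperator]
    refine tsum_congr fun y => ?_
    rw [← ih y, ← ENNReal.tsum_mul_left]
    refine tsum_congr fun q => ?_
    simp [backwardPathsSuccEquiv, Fin.prod_univ_succ, ← Fin.succ_last, q.2.1, mul_assoc]

/-- The weight `y ↦ 1 / #r⁻¹(r(y))`, whose transfer operator averages over the fibres of `r`.
On an infinite fibre `Nat.card` is `0` and the weight vanishes. -/
def preimageWeight (r : X → X) (y : X) : ℝ≥0 :=
  (Nat.card (r ⁻¹' {r y}) : ℝ≥0)⁻¹

theorem preimageWeight_coe {x : X} (y : r ⁻¹' {x}) :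
    preimageWeight r y = (Nat.card (r ⁻¹' {x}) : ℝ≥0)⁻¹ := by
  rw [preimageWeight, show r y = x from y.2]

theorem toReal_ruelleOperator_preimageWeight (f : X → ℝ≥0) (x : X) :
    (ruelleOperator r (preimageWeight r) (fun y => f y) x).toReal =
      (Nat.card (r ⁻¹' {x}) : ℝ)⁻¹ * ∑' y : r ⁻¹' {x}, (f y : ℝ) := by
  rw [ruelleOperator, ENNReal.tsum_toReal_eq fun y => by finiteness, ← tsum_mul_left]
  refine tsum_congr fun y => ?_
  simp [preimageWeight_coe]

theorem ruelleOperator_preimageWeight_lt_top {f : X → ℝ≥0∞} {x : X}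
    (hf : ∀ y, r y = x → preimageWeight r y = 0 ∨ f y < ∞) :
    ruelleOperator r (preimageWeight r) f x < ∞ := by
  rcases finite_or_infinite (r ⁻¹' {x}) with hfin | hinf
  · have := Fintype.ofFinite (r ⁻¹' {x})
    rw [ruelleOperator, tsum_fintype, ENNReal.sum_lt_top]
    intro y _
    rcases hf y y.2 with hy | hy
    · simp [hy]
    · finiteness
  · simp [ruelleOperator, preimageWeight_coe]

namespace StronglyInvariant

variable [MeasurableSpace X] {μ : Measure X}

theorem integral_toReal_ruelleOperator (hinv : StronglyInvariant r μ) {f : X → ℝ≥0}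
    (hf : Measurable f) (hbdd : BddAbove (Set.range f)) :
    ∫ x, (ruelleOperator r (preimageWeight r) (fun y => f y) x).toReal ∂μ = ∫ x, (f x : ℝ) ∂μ := by
  obtain ⟨C, hC⟩ := hbdd
  simp only [toReal_ruelleOperator_preimageWeight]
  exact (hinv (fun x => f x) hf.coe_nnreal_real ⟨C, fun x => by simpa using hC ⟨x, rfl⟩⟩).symm

theorem aemeasurable_and_lintegral_ruelleOperator_of_integral_ne_zero (hinv : StronglyInvariant r μ)
    {f : X → ℝ≥0} (hf : Measurable f) (hbdd : BddAbove (Set.range f))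
    (hne : ∫ x, (f x : ℝ) ∂μ ≠ 0) :
    AEMeasurable (ruelleOperator r (preimageWeight r) fun y => f y) μ ∧
      ∫⁻ x, ruelleOperator r (preimageWeight r) (fun y => f y) x ∂μ = ∫⁻ x, f x ∂μ := by
  have hintegral := hinv.integral_toReal_ruelleOperator hf hbdd
  set F := ruelleOperator r (preimageWeight r) fun y => f y
  have hF : ∀ x, ENNReal.ofReal (F x).toReal = F x := fun x =>
    ENNReal.ofReal_toReal (ruelleOperator_preimageWeight_lt_top fun y _ => .inr (by finiteness)).ne
  -- A nonzero Bochner integral forces integrability, hence a.e.-measurability of `F`.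
  have hFint : Integrable (fun x => (F x).toReal) μ := .of_integral_ne_zero (hintegral ▸ hne)
  have hfint : Integrable (fun x => (f x : ℝ)) μ := .of_integral_ne_zero hne
  refine ⟨by simpa only [hF] using hFint.aemeasurable.ennreal_ofReal, ?_⟩
  calc ∫⁻ x, F x ∂μ = ∫⁻ x, ENNReal.ofReal (F x).toReal ∂μ := by simp only [hF]
    _ = ENNReal.ofReal (∫ x, (F x).toReal ∂μ) :=
      (ofReal_integral_eq_lintegral_ofReal hFint (.of_forall fun _ => ENNReal.toReal_nonneg)).symm
    _ = ∫⁻ x, f x ∂μ := by rw [hintegral, lintegral_coe_eq_integral f hfint]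

variable [IsFiniteMeasure μ]

theorem aemeasurable_and_lintegral_ruelleOperator_of_bddAbove (hinv : StronglyInvariant r μ)
    {f : X → ℝ≥0} (hf : Measurable f) (hbdd : BddAbove (Set.range f)) :
    AEMeasurable (ruelleOperator r (preimageWeight r) fun y => f y) μ ∧
      ∫⁻ x, ruelleOperator r (preimageWeight r) (fun y => f y) x ∂μ = ∫⁻ x, f x ∂μ := by
  rcases eq_zero_or_neZero μ with rfl | hμ
  · simp
  obtain ⟨C, hC⟩ := hbdd
  have hfint : Integrable (fun x => (f x : ℝ)) μ :=
    .of_bound hf.coe_nnreal_real.aestronglyMeasurable C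
      (.of_forall fun x => by simpa using hC ⟨x, rfl⟩)
  -- Adding `1` makes the integral nonzero; the contribution of `1` is subtracted afterwards.
  have hne : ∫ x, ((f x + 1 : ℝ≥0) : ℝ) ∂μ ≠ 0 := by
    have hpos : 0 < μ.real Set.univ := measureReal_univ_pos
    simp only [NNReal.coe_add, NNReal.coe_one, integral_add hfint (integrable_const 1),
      integral_const, smul_eq_mul, mul_one]
    positivity
  have hone := hinv.aemeasurable_and_lintegral_ruelleOperator_of_integral_ne_zero measurable_one
    ⟨1, Set.forall_mem_range.2 fun _ => le_rfl⟩ (by simp [measureReal_univ_ne_zero])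
  have hsucc := hinv.aemeasurable_and_lintegral_ruelleOperator_of_integral_ne_zero (hf.add_const 1)
    ⟨C + 1, Set.forall_mem_range.2 fun x => by gcongr; exact hC ⟨x, rfl⟩⟩ hne
  simp only [Pi.one_apply, ENNReal.coe_one, ENNReal.coe_add] at hone hsucc
  have hadd : (ruelleOperator r (preimageWeight r) fun y => (f y + 1 : ℝ≥0∞)) =
      (ruelleOperator r (preimageWeight r) fun y => f y) +
        ruelleOperator r (preimageWeight r) fun _ => 1 :=
    ruelleOperator_add _ (fun y => (f y : ℝ≥0∞)) fun _ => 1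
  have hone_ne_top (x : X) : ruelleOperator r (preimageWeight r) (fun _ => 1) x ≠ ∞ :=
    (ruelleOperator_preimageWeight_lt_top fun _ _ => .inr ENNReal.one_lt_top).ne
  have hmeas : AEMeasurable (ruelleOperator r (preimageWeight r) fun y => f y) μ := by
    refine (hsucc.1.sub hone.1).congr (.of_forall fun x => ?_)
    rw [hadd]
    exact ENNReal.add_sub_cancel_right (hone_ne_top x)
  refine ⟨hmeas, ?_⟩
  have hsum := hsucc.2
  simp only [hadd, Pi.add_apply] at hsum
  rw [lintegral_add_left' hmeas, hone.2, lintegral_add_left hf.coe_nnreal_ennreal] at hsum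
  exact (ENNReal.add_left_inj (by simp)).1 hsum

theorem aemeasurable_and_lintegral_ruelleOperator_of_measurable (hinv : StronglyInvariant r μ)
    {f : X → ℝ≥0∞} (hf : Measurable f) :
    AEMeasurable (ruelleOperator r (preimageWeight r) f) μ ∧
      ∫⁻ x, ruelleOperator r (preimageWeight r) f x ∂μ = ∫⁻ x, f x ∂μ := by
  have happrox (k : ℕ) := hinv.aemeasurable_and_lintegral_ruelleOperator_of_bddAbove
    (SimpleFunc.eapproxDiff f k).measurable (SimpleFunc.finite_range _).bddAbove
  have hdecomp : f = fun x => ∑' k, (SimpleFunc.eapproxDiff f k x : ℝ≥0∞) :=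
    funext fun x => (SimpleFunc.tsum_eapproxDiff f hf x).symm
  rw [hdecomp, ruelleOperator_tsum]
  refine ⟨.tsum fun k => (happrox k).1, ?_⟩
  rw [lintegral_tsum fun k => (happrox k).1,
    lintegral_tsum fun k => (SimpleFunc.measurable _).coe_nnreal_ennreal.aemeasurable]
  exact tsum_congr fun k => (happrox k).2

theorem ae_forall_preimage (hinv : StronglyInvariant r μ) {p : X → Prop} (hp : ∀ᵐ y ∂μ, p y) :
    ∀ᵐ x ∂μ, ∀ y, r y = x → preimageWeight r y = 0 ∨ p y := by
  obtain ⟨N, hpN, hN, hμN⟩ := exists_measurable_superset_of_null (ae_iff.1 hp)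
  have hind : Measurable (N.indicator (1 : X → ℝ≥0∞)) := measurable_one.indicator hN
  obtain ⟨hmeas, hintegral⟩ :=
    hinv.aemeasurable_and_lintegral_ruelleOperator_of_measurable hind
  rw [lintegral_indicator_one hN, hμN, lintegral_eq_zero_iff' hmeas] at hintegral
  filter_upwards [hintegral] with x hx y hy
  have hterm := ENNReal.tsum_eq_zero.1 hx ⟨y, hy⟩
  by_contra! hcon
  simp [hpN hcon.2, hcon.1] at hterm

theorem ruelleOperator_congr_ae (hinv : StronglyInvariant r μ) {f g : X → ℝ≥0∞}
    (hfg : f =ᵐ[μ] g) :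
    ruelleOperator r (preimageWeight r) f =ᵐ[μ] ruelleOperator r (preimageWeight r) g := by
  filter_upwards [hinv.ae_forall_preimage hfg] with x hx
  refine tsum_congr fun y => ?_
  rcases hx y y.2 with hy | hy <;> simp [hy]

theorem aemeasurable_ruelleOperator (hinv : StronglyInvariant r μ) {f : X → ℝ≥0∞}
    (hf : AEMeasurable f μ) : AEMeasurable (ruelleOperator r (preimageWeight r) f) μ :=
  (hinv.aemeasurable_and_lintegral_ruelleOperator_of_measurable hf.measurable_mk).1.congr
    (hinv.ruelleOperator_congr_ae hf.ae_eq_mk).symm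

theorem lintegral_ruelleOperator (hinv : StronglyInvariant r μ) {f : X → ℝ≥0∞}
    (hf : AEMeasurable f μ) :
    ∫⁻ x, ruelleOperator r (preimageWeight r) f x ∂μ = ∫⁻ x, f x ∂μ := by
  rw [lintegral_congr_ae (hinv.ruelleOperator_congr_ae hf.ae_eq_mk),
    (hinv.aemeasurable_and_lintegral_ruelleOperator_of_measurable hf.measurable_mk).2,
    lintegral_congr_ae hf.ae_eq_mk]

variable {v : X → ℝ≥0}

theorem ae_iterate_ruelleOperator_lt_top (hinv : StronglyInvariant r μ) {f : X → ℝ≥0∞}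
    (hf : ∀ᵐ x ∂μ, f x < ∞) (n : ℕ) :
    ∀ᵐ x ∂μ, (ruelleOperator r (preimageWeight r * v))^[n] f x < ∞ := by
  induction n with
  | zero => exact hf
  | succ n ih =>
    rw [Function.iterate_succ_apply', ruelleOperator_mul_weight]
    filter_upwards [hinv.ae_forall_preimage ih] with x hx
    exact ruelleOperator_preimageWeight_lt_top fun y hy =>
      (hx y hy).imp_right fun h => ENNReal.mul_lt_top ENNReal.coe_lt_top h

theorem aemeasurable_iterate_ruelleOperator (hinv : StronglyInvariant r μ) (hv : Measurable v)
    {f : X → ℝ≥0∞} (hf : AEMeasurable f μ) (n : ℕ) :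
    AEMeasurable ((ruelleOperator r (preimageWeight r * v))^[n] f) μ := by
  induction n with
  | zero => exact hf
  | succ n ih =>
    rw [Function.iterate_succ_apply', ruelleOperator_mul_weight]
    exact hinv.aemeasurable_ruelleOperator (hv.coe_nnreal_ennreal.aemeasurable.mul ih)

theorem lintegral_iterate_ruelleOperator (hinv : StronglyInvariant r μ) (hr : Measurable r)
    (hv : Measurable v) {f : X → ℝ≥0∞} (hf : AEMeasurable f μ) (n : ℕ) :
    ∫⁻ x, (ruelleOperator r (preimageWeight r * v))^[n] f x ∂μ =
      ∫⁻ x, (∏ k ∈ Finset.range n, (v (r^[k] x) : ℝ≥0∞)) * f x ∂μ := by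
  induction n generalizing f with
  | zero => simp
  | succ n ih =>
    have hvf : AEMeasurable (fun x => v x * f x) μ := hv.coe_nnreal_ennreal.aemeasurable.mul hf
    have hprod : Measurable fun x => ∏ k ∈ Finset.range n, (v (r^[k + 1] x) : ℝ≥0∞) :=
      Finset.measurable_prod _ fun k _ => (hv.comp (hr.iterate _)).coe_nnreal_ennreal
    rw [Function.iterate_succ_apply, ruelleOperator_mul_weight,
      ih (hinv.aemeasurable_ruelleOperator hvf)]
    simp only [mul_ruelleOperator _ fun x => ∏ k ∈ Finset.range n, (v (r^[k] x) : ℝ≥0∞),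
      ← Function.iterate_succ_apply r]
    refine (hinv.lintegral_ruelleOperator (hprod.aemeasurable.mul hvf)).trans ?_
    simp only [Pi.mul_apply, Finset.prod_range_succ', Function.iterate_zero_apply, mul_assoc]

end StronglyInvariant

namespace IsPathMeasure

variable [MeasurableSpace X] {μ : Measure X} {m0 : X → ℂ} {ν : Measure (Solenoid r)}

theorem measureReal_coord_mem_eq_integral_iterate (hν : IsPathMeasure r μ m0 ν) {A : Set X}
    (hA : MeasurableSet A) (n : ℕ) :
    ν.real {z | z.1 n ∈ A} = ∫ x, ((ruelleOperator r
      (preimageWeight r * fun y => ‖m0 y‖₊ ^ 2))^[n] (A.indicator 1) x).toReal ∂μ := by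
  have hcoord : MeasurableSet {z : Solenoid r | z.1 n ∈ A} :=
    (measurable_pi_apply n).comp measurable_subtype_coe hA
  have hcyl := hν n (fun q => A.indicator 1 (q (Fin.last n)))
    ((measurable_one.indicator hA).comp (measurable_pi_apply _))
    ⟨1, fun q => by by_cases hq : q (Fin.last n) ∈ A <;> simp [hq]⟩
  rw [← integral_indicator_one hcoord]
  refine hcyl.trans (integral_congr_ae (.of_forall fun x => ?_))
  simp only [← tsum_backwardPaths]
  rw [ENNReal.tsum_toReal_eq fun q => by
    by_cases hq : q.1 (Fin.last n) ∈ A <;> simp [hq, ENNReal.mul_eq_top, ENNReal.prod_ne_top]]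
  refine tsum_congr fun q => ?_
  by_cases hq : q.1 (Fin.last n) ∈ A <;>
    simp [hq, preimageWeight, div_eq_inv_mul, ENNReal.toReal_prod]

theorem measureReal_coord_mem_eq_setIntegral [IsFiniteMeasure μ] (hν : IsPathMeasure r μ m0 ν)
    (hinv : StronglyInvariant r μ) (hr : Measurable r) (hm0 : Measurable m0) {A : Set X}
    (hA : MeasurableSet A) (n : ℕ) :
    ν.real {z | z.1 n ∈ A} = ∫ x in A, ∏ k ∈ Finset.range n, ‖m0 (r^[k] x)‖ ^ 2 ∂μ := by
  have hweight : Measurable fun y => ‖m0 y‖₊ ^ 2 := hm0.nnnorm.pow_const 2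
  have hind : AEMeasurable (A.indicator (1 : X → ℝ≥0∞)) μ :=
    (measurable_one.indicator hA).aemeasurable
  have hind_lt_top : ∀ᵐ x ∂μ, A.indicator (1 : X → ℝ≥0∞) x < ∞ := .of_forall fun x =>
    (Set.indicator_le_self' (fun _ _ => zero_le) x).trans_lt ENNReal.one_lt_top
  have hprod : Measurable fun x => ∏ k ∈ Finset.range n, ((‖m0 (r^[k] x)‖₊ ^ 2 : ℝ≥0) : ℝ≥0∞) :=
    Finset.measurable_prod _ fun k _ => (hweight.comp (hr.iterate k)).coe_nnreal_ennreal
  calc ν.real {z | z.1 n ∈ A}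
      = (∫⁻ x, (ruelleOperator r (preimageWeight r * fun y => ‖m0 y‖₊ ^ 2))^[n]
          (A.indicator 1) x ∂μ).toReal := by
        rw [hν.measureReal_coord_mem_eq_integral_iterate hA,
          integral_toReal (hinv.aemeasurable_iterate_ruelleOperator hweight hind n)
            (hinv.ae_iterate_ruelleOperator_lt_top hind_lt_top n)]
    _ = (∫⁻ x in A, ∏ k ∈ Finset.range n, ((‖m0 (r^[k] x)‖₊ ^ 2 : ℝ≥0) : ℝ≥0∞) ∂μ).toReal := by
        rw [hinv.lintegral_iterate_ruelleOperator hr hweight hind, ← lintegral_indicator hA]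
        congr! with x
        by_cases hx : x ∈ A <;> simp [hx]
    _ = ∫ x in A, ∏ k ∈ Finset.range n, ‖m0 (r^[k] x)‖ ^ 2 ∂μ := by
        rw [← integral_toReal hprod.aemeasurable
          (.of_forall fun x => ENNReal.prod_lt_top fun k _ => ENNReal.coe_lt_top)]
        simp [ENNReal.toReal_prod]

theorem isFiniteMeasure [IsFiniteMeasure μ] [NeZero μ] (hν : IsPathMeasure r μ m0 ν) :
    IsFiniteMeasure ν := by
  have huniv : ν.real Set.univ = μ.real Set.univ := by
    simpa using hν.measureReal_coord_mem_eq_integral_iterate .univ 0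
  have hne : ν.real Set.univ ≠ 0 := huniv ▸ measureReal_univ_ne_zero
  exact ⟨(ENNReal.toReal_ne_zero.1 hne).2.lt_top⟩

end IsPathMeasure

end

theorem ae_eventually_not_mem_of_summable_general
    {X : Type*} [MeasurableSpace X] {r : X → X} (hr : Measurable r)
    {μ : Measure X} [IsFiniteMeasure μ] [NeZero μ] (hinv : StronglyInvariant r μ)
    {m0 : X → ℂ} (hm0 : Measurable m0)
    {ν : Measure (Solenoid r)} (hν : IsPathMeasure r μ m0 ν)
    {A₀ : Set X} (hA₀ : MeasurableSet A₀)
    (hsum : Summable fun m : ℕ =>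
      ∫ x in A₀, ∏ k ∈ Finset.range (m + 1), ‖m0 (r^[k] x)‖ ^ 2 ∂μ) :
    ∀ᵐ z ∂ν, ∃ k : ℕ, ∀ n : ℕ, k ≤ n → z.1 n ∉ A₀ := by
  have : IsFiniteMeasure ν := hν.isFiniteMeasure
  have hmass (m : ℕ) : ν {z | z.1 (m + 1) ∈ A₀} =
      ENNReal.ofReal (∫ x in A₀, ∏ k ∈ Finset.range (m + 1), ‖m0 (r^[k] x)‖ ^ 2 ∂μ) := by
    rw [← hν.measureReal_coord_mem_eq_setIntegral hinv hr hm0 hA₀, ofReal_measureReal]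
  have hfinite : ∑' m : ℕ, ν {z | z.1 (m + 1) ∈ A₀} ≠ ⊤ := by
    simpa only [hmass] using hsum.tsum_ofReal_ne_top
  filter_upwards [ae_eventually_notMem hfinite] with z hz
  exact eventually_atTop.1 (map_add_atTop_eq_nat 1 ▸ eventually_map.2 hz)

/-- **Borel–Cantelli step.** If `A₀ ⊆ X` has positive measure and
`Σ_{m≥1} ∫_{A₀} |m0(x)⋯m0(r^{m-1}x)|² dμ < ∞`, then for `μ_∞`-a.e. backward orbit
`z = (z_n)` in the solenoid only finitely many coordinates `z_n` lie in `A₀`. -/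
theorem ae_eventually_not_mem_of_summable
    {X : Type*} [MetricSpace X] [CompactSpace X] [MeasurableSpace X] [BorelSpace X]
    (r : X → X) (hr : Measurable r) (hsurj : Function.Surjective r)
    (hfin : ∀ x : X, (r ⁻¹' {x}).Finite)
    (μ : Measure X) [IsProbabilityMeasure μ] (hinv : StronglyInvariant r μ)
    (herg : Ergodic r μ)
    (m0 : X → ℂ) (hm0 : BddMeasC m0) (hqmf : IsQMF r μ m0)
    (hne1 : ¬ (∀ᵐ x ∂μ, ‖m0 x‖ = 1))
    (hns : μ {x | m0 x = 0} = 0)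
    (hlog : Integrable (fun x => Real.log (‖m0 x‖ ^ 2)) μ)
    (ν : Measure (Solenoid r)) (hν : IsPathMeasure r μ m0 ν)
    (A₀ : Set X) (hA₀ : MeasurableSet A₀) (hA₀pos : 0 < μ A₀)
    (hsum : Summable (fun m : ℕ =>
      ∫ x in A₀, ∏ k ∈ Finset.range (m + 1), ‖m0 (r^[k] x)‖ ^ 2 ∂μ)) :
    ∀ᵐ z ∂ν, ∃ k : ℕ, ∀ n : ℕ, k ≤ n → z.1 n ∉ A₀ := by
  exact ae_eventually_not_mem_of_summable_general hr hinv hm0.1 hν hA₀ hsum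
end
end
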